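/- (Non-degeneracy for large μ.) Let g ∈ C¹([0,∞),[0,∞)) satisfy (g₊), (g_s), (g₀) and (g_∞). Let h ∈ L¹([a,b]) satisfy condition (h*) with m positivity intervals, and suppose in addition that for every i ∈ {1,…,m}: h⁺ ∈ BV(I_i⁺), h⁺(t) = h⁺(σ_i + τ_i − t) for a.e. t ∈ [σ_i, τ_i], and h⁺ is non-decreasing on [σ_i, ζ_i], where ζ_i := (σ_i + τ_i)/2. Then there exists μ** > 0 such that for every μ > μ** every positive solution u of (D_μ) is non-degenerate, i.e. the only Carathéodory solution w of w'' + (h⁺(t) − μ h⁻(t)) g'(u(t)) w = 0 with w(a) = 0 = w(b) is w ≡ 0. -/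

import Mathlib

open Set MeasureTheory Filter Topology

/-- Carathéodory solution of `u'' + F(t, u) = 0` on `[a,b]`. -/
def IsCaraSol (a b : ℝ) (F : ℝ → ℝ → ℝ) (u u' : ℝ → ℝ) : Prop :=
  (∀ t ∈ Set.Icc a b, HasDerivAt u (u' t) t) ∧
  IntervalIntegrable (fun s => F s (u s)) MeasureTheory.volume a b ∧
  ∀ t ∈ Set.Icc a b, u' t = u' a - ∫ s in a..t, F s (u s)

/-- The positive part `h⁺ = |h|/2 + h/2` of a weight function. -/
noncomputable def posW (h : ℝ → ℝ) : ℝ → ℝ := fun t => |h t| / 2 + h t / 2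

/-- The negative part `h⁻ = |h|/2 - h/2` of a weight function. -/
noncomputable def negW (h : ℝ → ℝ) : ℝ → ℝ := fun t => |h t| / 2 - h t / 2

/-- `u' = v`, `v' = f` on `[x,y]` in the Caratheodory sense. -/
structure Sol (x y : ℝ) (u v f : ℝ → ℝ) : Prop where
  hd : ∀ t ∈ Icc x y, HasDerivAt u (v t) t
  int : IntervalIntegrable f volume x y
  eq : ∀ s ∈ Icc x y, ∀ t ∈ Icc x y, v t - v s = ∫ r in s..t, f r

lemma ii_sub {x y s t : ℝ} {f : ℝ → ℝ} (hf : IntervalIntegrable f volume x y)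
    (hs : s ∈ Icc x y) (ht : t ∈ Icc x y) : IntervalIntegrable f volume s t := by
  apply hf.mono_set
  rw [uIcc_of_le (hs.1.trans hs.2)]
  exact uIcc_subset_Icc hs ht

lemma ii_congr {x y : ℝ} (hxy : x ≤ y) {f f' : ℝ → ℝ} (hf : IntervalIntegrable f volume x y)
    (h : ∀ᵐ t, t ∈ Ioc x y → f t = f' t) : IntervalIntegrable f' volume x y := by
  refine hf.congr_ae ?_
  rw [uIoc_of_le hxy]
  exact (ae_restrict_iff' measurableSet_Ioc).2 h

lemma int_congr {x y s t : ℝ} {f f' : ℝ → ℝ} (hs : s ∈ Icc x y) (ht : t ∈ Icc x y)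
    (h : ∀ᵐ t, t ∈ Ioc x y → f t = f' t) : ∫ r in s..t, f r = ∫ r in s..t, f' r := by
  apply intervalIntegral.integral_congr_ae
  filter_upwards [h] with r hr hrr
  apply hr
  rcases le_total s t with hst | hst
  · rw [uIoc_of_le hst] at hrr; exact ⟨hs.1.trans_lt hrr.1, hrr.2.trans ht.2⟩
  · rw [uIoc_of_ge hst] at hrr; exact ⟨ht.1.trans_lt hrr.1, hrr.2.trans hs.2⟩

lemma int_nonneg {x y : ℝ} (hxy : x ≤ y) {f : ℝ → ℝ} (h : ∀ᵐ t, t ∈ Ioc x y → 0 ≤ f t) :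
    0 ≤ ∫ r in x..y, f r := by
  rw [intervalIntegral.integral_of_le hxy]
  exact setIntegral_nonneg_of_ae_restrict ((ae_restrict_iff' measurableSet_Ioc).2 h)

lemma int_mono {x y : ℝ} (hxy : x ≤ y) {f f' : ℝ → ℝ} (hf : IntervalIntegrable f volume x y)
    (hf' : IntervalIntegrable f' volume x y) (h : ∀ᵐ t, t ∈ Ioc x y → f t ≤ f' t) :
    ∫ r in x..y, f r ≤ ∫ r in x..y, f' r := by
  have := int_nonneg (f := fun t => f' t - f t) hxy (by
    filter_upwards [h] with t ht htt
    have := ht htt; linarith)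
  rw [intervalIntegral.integral_sub hf' hf] at this
  linarith

/-- product rule, integral form -/
lemma prod_inc {x y : ℝ} (hxy : x ≤ y) {A B α β : ℝ → ℝ}
    (hα : IntervalIntegrable α volume x y) (hβ : IntervalIntegrable β volume x y)
    (hA : ∀ t ∈ Icc x y, A t - A x = ∫ r in x..t, α r)
    (hB : ∀ t ∈ Icc x y, B t - B x = ∫ r in x..t, β r) :
    A y * B y - A x * B x = ∫ r in x..y, (α r * B r + A r * β r) := by
  set A' : ℝ → ℝ := fun t => A x + ∫ r in x..t, α r with hA'
  set B' : ℝ → ℝ := fun t => B x + ∫ r in x..t, β r with hB'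
  have eA : ∀ t ∈ Icc x y, A' t = A t := fun t ht => by have := hA t ht; simp only [hA']; linarith
  have eB : ∀ t ∈ Icc x y, B' t = B t := fun t ht => by have := hB t ht; simp only [hB']; linarith
  have hc : ∀ c : ℝ, AbsolutelyContinuousOnInterval (fun _ : ℝ => c) x y := fun c =>
    (contDiffOn_const (n := 1)).absolutelyContinuousOnInterval
  have acA : AbsolutelyContinuousOnInterval A' x y :=
    (hc (A x)).add (hα.absolutelyContinuousOnInterval_intervalIntegral (c := x) (by simp))
  have acB : AbsolutelyContinuousOnInterval B' x y :=
    (hc (B x)).add (hβ.absolutelyContinuousOnInterval_intervalIntegral (c := x) (by simp))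
  have key := acA.integral_deriv_mul_eq_sub acB
  have hx : x ∈ Icc x y := ⟨le_rfl, hxy⟩
  have hy : y ∈ Icc x y := ⟨hxy, le_rfl⟩
  rw [eA x hx, eA y hy, eB x hx, eB y hy] at key
  rw [← key]
  apply intervalIntegral.integral_congr_ae
  filter_upwards [hα.ae_hasDerivAt_integral, hβ.ae_hasDerivAt_integral] with r h1 h2 hr
  have hr' : r ∈ uIcc x y := uIoc_subset_uIcc hr
  have hr'' : r ∈ Icc x y := by rwa [uIcc_of_le hxy] at hr'
  have d1 : HasDerivAt A' (α r) r := (h1 hr' x (by simp)).const_add _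
  have d2 : HasDerivAt B' (β r) r := (h2 hr' x (by simp)).const_add _
  rw [d1.deriv, d2.deriv, eA r hr'', eB r hr'']

namespace Sol
variable {x y : ℝ} {u v f : ℝ → ℝ}

lemma mono (S : Sol x y u v f) {x' y' : ℝ} (hx : x ≤ x') (hxy' : x' ≤ y') (hy : y' ≤ y) :
    Sol x' y' u v f := by
  have hs : Icc x' y' ⊆ Icc x y := Icc_subset_Icc hx hy
  exact ⟨fun t ht => S.hd t (hs ht), ii_sub S.int (hs ⟨le_rfl, hxy'⟩) (hs ⟨hxy', le_rfl⟩),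
    fun s hs' t ht => S.eq s (hs hs') t (hs ht)⟩

lemma congr (hxy : x ≤ y) (S : Sol x y u v f) {f' : ℝ → ℝ}
    (h : ∀ᵐ t, t ∈ Ioc x y → f t = f' t) : Sol x y u v f' :=
  ⟨S.hd, ii_congr hxy S.int h, fun s hs t ht => by rw [S.eq s hs t ht, int_congr hs ht h]⟩

lemma cu (S : Sol x y u v f) : ContinuousOn u (Icc x y) :=
  fun t ht => (S.hd t ht).continuousAt.continuousWithinAt

lemma cv (hxy : x ≤ y) (S : Sol x y u v f) : ContinuousOn v (Icc x y) := by
  have h1 : ContinuousOn (fun t => v x + ∫ r in x..t, f r) (Icc x y) := by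
    apply ContinuousOn.add continuousOn_const
    have := intervalIntegral.continuousOn_primitive_interval (a := x) (b := y) (f := f)
      (μ := volume) ?_
    · rwa [uIcc_of_le hxy] at this
    · rw [uIcc_of_le hxy]
      exact (intervalIntegrable_iff_integrableOn_Icc_of_le hxy).1 S.int
  refine h1.congr fun t ht => ?_
  have := S.eq x ⟨le_rfl, hxy⟩ t ht
  simp only; linarith

lemma iv (hxy : x ≤ y) (S : Sol x y u v f) : IntervalIntegrable v volume x y := by
  apply ContinuousOn.intervalIntegrable
  rw [uIcc_of_le hxy]; exact S.cv hxy

lemma ftc (hxy : x ≤ y) (S : Sol x y u v f) {s t : ℝ} (hs : s ∈ Icc x y) (ht : t ∈ Icc x y) :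
    u t - u s = ∫ r in s..t, v r := by
  symm
  apply intervalIntegral.integral_eq_sub_of_hasDerivAt
  · intro r hr; exact S.hd r (uIcc_subset_Icc hs ht hr)
  · exact ii_sub (S.iv hxy) hs ht

lemma reflect (c : ℝ) (S : Sol x y u v f) :
    Sol (c - y) (c - x) (fun t => u (c - t)) (fun t => - v (c - t)) (fun t => f (c - t)) := by
  have hm : ∀ t ∈ Icc (c - y) (c - x), c - t ∈ Icc x y := fun t ht =>
    ⟨by linarith [ht.2], by linarith [ht.1]⟩
  refine ⟨fun t ht => ?_, ?_, fun s hs t ht => ?_⟩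
  · have := (S.hd (c - t) (hm t ht)).comp t ((hasDerivAt_id t).const_sub c)
    simpa [Function.comp_def] using this
  · have := S.int.comp_sub_left c
    exact this.symm
  · rw [intervalIntegral.integral_comp_sub_left (fun t => f t) c, ← S.eq _ (hm t ht) _ (hm s hs)]
    ring

lemma reflect' {σ τ : ℝ} (S : Sol σ τ u v f) :
    Sol σ τ (fun t => u (σ + τ - t)) (fun t => - v (σ + τ - t)) (fun t => f (σ + τ - t)) := by
  have := S.reflect (σ + τ)
  simpa using this

lemma smul (S : Sol x y u v f) (c : ℝ) :
    Sol x y (fun t => c * u t) (fun t => c * v t) (fun t => c * f t) := by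
  refine ⟨fun t ht => (S.hd t ht).const_mul c, S.int.const_mul c, fun s hs t ht => ?_⟩
  rw [intervalIntegral.integral_const_mul, ← S.eq s hs t ht]; ring

lemma neg (S : Sol x y u v f) : Sol x y (fun t => - u t) (fun t => - v t) (fun t => - f t) := by
  have := S.smul (-1)
  simpa using this

lemma v_mono (S : Sol x y u v f) (h : ∀ᵐ t, t ∈ Ioc x y → 0 ≤ f t) : MonotoneOn v (Icc x y) := by
  intro s hs t ht hst
  have := int_nonneg (f := f) hst (by
    filter_upwards [h] with r hr hrr
    exact hr ⟨hs.1.trans_lt hrr.1, hrr.2.trans ht.2⟩)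
  rw [← S.eq s hs t ht] at this
  linarith

lemma v_anti (S : Sol x y u v f) (h : ∀ᵐ t, t ∈ Ioc x y → f t ≤ 0) : AntitoneOn v (Icc x y) := by
  have := S.neg.v_mono (by filter_upwards [h] with t ht htt; have := ht htt; linarith)
  intro s hs t ht hst
  have := this hs ht hst
  simp at this; exact this

lemma mvt (S : Sol x y u v f) {s t : ℝ} (hs : s ∈ Icc x y) (ht : t ∈ Icc x y) (hst : s < t) :
    ∃ ξ ∈ Ioo s t, u t - u s = v ξ * (t - s) := by
  obtain ⟨ξ, h1, h2⟩ := exists_hasDerivAt_eq_slope u v hst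
    (S.cu.mono (Icc_subset_Icc hs.1 ht.2))
    (fun r hr => S.hd r ⟨hs.1.trans hr.1.le, hr.2.le.trans ht.2⟩)
  refine ⟨ξ, h1, ?_⟩
  rw [h2]; field_simp [sub_ne_zero.2 hst.ne']

lemma tangent (S : Sol x y u v f) (hv : MonotoneOn v (Icc x y)) {s t : ℝ} (hs : s ∈ Icc x y)
    (ht : t ∈ Icc x y) : u s + v s * (t - s) ≤ u t := by
  rcases lt_trichotomy s t with h | h | h
  · obtain ⟨ξ, h1, h2⟩ := S.mvt hs ht h
    have := hv hs ⟨hs.1.trans h1.1.le, h1.2.le.trans ht.2⟩ h1.1.le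
    nlinarith
  · subst h; simp
  · obtain ⟨ξ, h1, h2⟩ := S.mvt ht hs h
    have := hv ⟨ht.1.trans h1.1.le, h1.2.le.trans hs.2⟩ hs h1.2.le
    nlinarith

lemma tangent' (S : Sol x y u v f) (hv : AntitoneOn v (Icc x y)) {s t : ℝ} (hs : s ∈ Icc x y)
    (ht : t ∈ Icc x y) : u t ≤ u s + v s * (t - s) := by
  have := S.neg.tangent (fun a ha b hb hab => neg_le_neg (hv ha hb hab)) hs ht
  simp at this; linarith

/-- chord inequality for concave functions -/
lemma chord (S : Sol x y u v f) (hv : AntitoneOn v (Icc x y)) {r s t : ℝ} (hr : r ∈ Icc x y)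
    (ht : t ∈ Icc x y) (hrs : r ≤ s) (hst : s ≤ t) :
    u r * (t - s) + u t * (s - r) ≤ u s * (t - r) := by
  have hs : s ∈ Icc x y := ⟨hr.1.trans hrs, hst.trans ht.2⟩
  have h1 := S.tangent' hv hs hr
  have h2 := S.tangent' hv hs ht
  nlinarith [mul_le_mul_of_nonneg_right h1 (sub_nonneg.2 hst),
    mul_le_mul_of_nonneg_right h2 (sub_nonneg.2 hrs)]

lemma chord' (S : Sol x y u v f) (hv : MonotoneOn v (Icc x y)) {r s t : ℝ} (hr : r ∈ Icc x y)
    (ht : t ∈ Icc x y) (hrs : r ≤ s) (hst : s ≤ t) :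
    u s * (t - r) ≤ u r * (t - s) + u t * (s - r) := by
  have := S.neg.chord (fun a ha b hb hab => neg_le_neg (hv ha hb hab)) hr ht hrs hst
  simp at this; linarith

/-- `u * v₂` increments -/
lemma inc_uv (hxy : x ≤ y) (S : Sol x y u v f) {u2 v2 f2 : ℝ → ℝ} (S2 : Sol x y u2 v2 f2) :
    u y * v2 y - u x * v2 x = ∫ r in x..y, (v r * v2 r + u r * f2 r) :=
  prod_inc hxy (S.iv hxy) S2.int (fun _ ht => S.ftc hxy ⟨le_rfl, hxy⟩ ht)
    (fun _ ht => S2.eq _ ⟨le_rfl, hxy⟩ _ ht)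

lemma inc_vv (hxy : x ≤ y) (S : Sol x y u v f) {u2 v2 f2 : ℝ → ℝ} (S2 : Sol x y u2 v2 f2) :
    v y * v2 y - v x * v2 x = ∫ r in x..y, (f r * v2 r + v r * f2 r) :=
  prod_inc hxy S.int S2.int (fun _ ht => S.eq _ ⟨le_rfl, hxy⟩ _ ht)
    (fun _ ht => S2.eq _ ⟨le_rfl, hxy⟩ _ ht)

end Sol

structure GG (g g' : ℝ → ℝ) : Prop where
  hd : ∀ s, HasDerivAt g (g' s) s
  cont : Continuous g'
  zero : g 0 = 0
  pos : ∀ s > 0, 0 < g s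
  sup : ∀ s > 0, g s < g' s * s
  dzero : g' 0 = 0
  infty : Tendsto (fun s => g s / s) atTop atTop
  nonneg' : ∀ s, 0 ≤ g' s

namespace GG
variable {g g' : ℝ → ℝ}
lemma cg (H : GG g g') : Continuous g :=
  continuous_iff_continuousAt.2 fun s => (H.hd s).continuousAt
lemma mono (H : GG g g') : Monotone g := by
  apply monotone_of_deriv_nonneg (fun s => (H.hd s).differentiableAt)
  intro s; rw [(H.hd s).deriv]; exact H.nonneg' s
lemma nonneg (H : GG g g') {s : ℝ} (hs : 0 ≤ s) : 0 ≤ g s := by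
  rw [← H.zero]; exact H.mono hs
lemma sup_le (H : GG g g') {s : ℝ} (hs : 0 ≤ s) : g s ≤ g' s * s := by
  rcases hs.eq_or_lt with h | h
  · subst h; rw [H.zero]; simp
  · exact (H.sup s h).le
end GG

structure Wt (σ τ c : ℝ) (P : ℝ → ℝ) : Prop where
  c1 : σ < c
  c2 : c < (σ + τ) / 2
  nonneg : ∀ t ∈ Icc σ τ, 0 ≤ P t
  symm : ∀ t, P (σ + τ - t) = P t
  mono : MonotoneOn P (Icc σ ((σ + τ) / 2))
  int : IntervalIntegrable P volume σ τ
  pos : 0 < P c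

lemma Wt.lt {σ τ c : ℝ} {P : ℝ → ℝ} (W : Wt σ τ c P) : σ < τ := by
  linarith [W.c1, W.c2]

lemma Wt.ge {σ τ c : ℝ} {P : ℝ → ℝ} (W : Wt σ τ c P) {t : ℝ} (h1 : c ≤ t) (h2 : t ≤ σ + τ - c) :
    P c ≤ P t := by
  have := W.c1
  have := W.c2
  rcases le_total t ((σ + τ) / 2) with h | h
  · exact W.mono ⟨by linarith, by linarith⟩ ⟨by linarith, h⟩ h1
  · rw [← W.symm t]
    exact W.mono ⟨by linarith, by linarith⟩ ⟨by linarith, by linarith⟩ (by linarith)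

lemma int_pos' {x y c d : ℝ} (hxc : x ≤ c) (hcd : c < d) (hdy : d ≤ y) {f : ℝ → ℝ}
    (hf : IntervalIntegrable f volume x y) (h : ∀ t ∈ Icc x y, 0 ≤ f t)
    (h2 : ∀ t ∈ Ioo c d, 0 < f t) : 0 < ∫ t in x..y, f t := by
  have hx : x ∈ Icc x y := ⟨le_rfl, by linarith⟩
  have hy : y ∈ Icc x y := ⟨by linarith, le_rfl⟩
  have hc : c ∈ Icc x y := ⟨by linarith, by linarith⟩
  have hd : d ∈ Icc x y := ⟨by linarith, by linarith⟩
  rw [← intervalIntegral.integral_add_adjacent_intervals (ii_sub hf hx hc) (ii_sub hf hc hy),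
    ← intervalIntegral.integral_add_adjacent_intervals (ii_sub hf hc hd) (ii_sub hf hd hy)]
  have h1 : 0 ≤ ∫ t in x..c, f t :=
    intervalIntegral.integral_nonneg hxc fun t ht => h t ⟨ht.1, by linarith [ht.2]⟩
  have h3 : 0 ≤ ∫ t in d..y, f t :=
    intervalIntegral.integral_nonneg hdy fun t ht => h t ⟨by linarith [ht.1], ht.2⟩
  have h4 : 0 < ∫ t in c..d, f t :=
    intervalIntegral.intervalIntegral_pos_of_pos_on (ii_sub hf hc hd) h2 hcd
  linarith

lemma mono_ii {x y : ℝ} (hxy : x ≤ y) {P : ℝ → ℝ} (hP : MonotoneOn P (Icc x y)) :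
    IntervalIntegrable P volume x y := by
  apply MonotoneOn.intervalIntegrable
  rwa [uIcc_of_le hxy]

lemma mono_lemma {x y : ℝ} (hxy : x ≤ y) {P φ ψ : ℝ → ℝ} (hP : MonotoneOn P (Icc x y))
    (hφ : ∀ t ∈ Icc x y, HasDerivAt φ (ψ t) t) (hψ : ContinuousOn ψ (Icc x y))
    (hφ0 : ∀ t ∈ Icc x y, 0 ≤ φ t) :
    ∫ t in x..y, P t * ψ t ≤ P y * φ y - P x * φ x := by
  obtain ⟨C, hC⟩ := isCompact_Icc.exists_bound_of_continuousOn hψ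
  have iP : IntervalIntegrable P volume x y := mono_ii hxy hP
  have iψ : IntervalIntegrable ψ volume x y := by
    apply ContinuousOn.intervalIntegrable; rwa [uIcc_of_le hxy]
  have iPψ : IntervalIntegrable (fun t => P t * ψ t) volume x y :=
    iP.mul_continuousOn (by rwa [uIcc_of_le hxy])
  have step : ∀ s ∈ Icc x y, ∀ t ∈ Icc x y, s ≤ t →
      ∫ r in s..t, P r * ψ r ≤ P t * φ t - P s * φ s + C * (t - s) * (P t - P s) := by
    intro s hs t ht hst
    have e1 : ∫ r in s..t, P s * ψ r = P s * (φ t - φ s) := by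
      rw [intervalIntegral.integral_const_mul]
      congr 1
      apply intervalIntegral.integral_eq_sub_of_hasDerivAt
      · intro r hr; exact hφ r (uIcc_subset_Icc hs ht hr)
      · exact ii_sub iψ hs ht
    have e2 : ∫ r in s..t, (P r * ψ r - P s * ψ r) ≤ ∫ r in s..t, C * (P t - P s) := by
      apply intervalIntegral.integral_mono_on hst
      · exact (ii_sub iPψ hs ht).sub ((ii_sub iψ hs ht).const_mul _)
      · simp
      · intro r hr
        have hr' : r ∈ Icc x y := ⟨hs.1.trans hr.1, hr.2.trans ht.2⟩
        have h1 := hP hs hr' hr.1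
        have h2 := hP hr' ht hr.2
        have h3 := abs_le.1 (hC r hr')
        have h4 : 0 ≤ C := (norm_nonneg _).trans (hC r hr')
        nlinarith [mul_nonneg (sub_nonneg.2 h1) (sub_nonneg.2 h3.2),
          mul_nonneg h4 (sub_nonneg.2 h2)]
    rw [intervalIntegral.integral_sub (ii_sub iPψ hs ht) ((ii_sub iψ hs ht).const_mul _), e1] at e2
    rw [intervalIntegral.integral_const, smul_eq_mul] at e2
    have := mul_le_mul_of_nonneg_right (hP hs ht hst) (hφ0 t ht)
    nlinarith
  have main : ∀ N : ℕ, ∫ t in x..y, P t * ψ t ≤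
      P y * φ y - P x * φ x + (C * (y - x) * (P y - P x)) / (N + 1 : ℝ) := by
    intro N
    have hN : (0 : ℝ) < N + 1 := by positivity
    set η := (y - x) / (N + 1) with hη
    have hη0 : 0 ≤ η := div_nonneg (by linarith) hN.le
    have hηN : (N + 1) * η = y - x := by rw [hη]; field_simp
    have ind : ∀ k : ℕ, k ≤ N + 1 → ∫ t in x..(x + k * η), P t * ψ t ≤
      P (x + k * η) * φ (x + k * η) - P x * φ x + C * η * (P (x + k * η) - P x) := by
      intro k
      induction k with
      | zero => intro _; simp
      | succ k ih =>
        intro hk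
        have ih := ih (by omega)
        have hk' : (k : ℝ) + 1 ≤ N + 1 := by exact_mod_cast hk
        have hk0 : (0 : ℝ) ≤ k := by positivity
        have hkη : (k + 1) * η ≤ y - x := by rw [← hηN]; gcongr
        have m0 : x ∈ Icc x y := ⟨le_rfl, hxy⟩
        have m1 : x + k * η ∈ Icc x y := ⟨by nlinarith, by nlinarith⟩
        have m2 : x + ((k + 1 : ℕ) : ℝ) * η ∈ Icc x y := by
          push_cast; exact ⟨by nlinarith, by nlinarith⟩
        have := step _ m1 _ m2 (by push_cast; nlinarith)
        rw [← intervalIntegral.integral_add_adjacent_intervals (ii_sub iPψ m0 m1) (ii_sub iPψ m1 m2)]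
        have e : x + ((k + 1 : ℕ) : ℝ) * η - (x + k * η) = η := by push_cast; ring
        rw [e] at this
        linarith
    have := ind (N + 1) le_rfl
    push_cast at this
    rw [hηN] at this
    have e : x + (y - x) = y := by ring
    rw [e] at this
    calc _ ≤ _ := this
      _ = _ := by rw [hη]; ring
  have lim : Tendsto (fun N : ℕ => P y * φ y - P x * φ x + (C * (y - x) * (P y - P x)) / (N + 1 : ℝ))
      atTop (𝓝 (P y * φ y - P x * φ x + 0)) := by
    apply Tendsto.const_add
    have := (tendsto_const_div_atTop_nhds_zero_nat (C * (y - x) * (P y - P x))).comp (tendsto_add_atTop_nat 1)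
    simpa [Function.comp_def] using this
  have := ge_of_tendsto' lim main
  linarith

lemma Sol.add {x y : ℝ} {u v f u2 v2 f2 : ℝ → ℝ} (S : Sol x y u v f) (S2 : Sol x y u2 v2 f2) :
    Sol x y (fun t => u t + u2 t) (fun t => v t + v2 t) (fun t => f t + f2 t) := by
  refine ⟨fun t ht => (S.hd t ht).add (S2.hd t ht), S.int.add S2.int, fun s hs t ht => ?_⟩
  rw [intervalIntegral.integral_add (ii_sub S.int hs ht) (ii_sub S2.int hs ht), ← S.eq s hs t ht,
    ← S2.eq s hs t ht]
  ring

section MP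
variable {σ τ c : ℝ} {P g g' u v : ℝ → ℝ}

lemma refl_pos (W : Wt σ τ c P) (G : GG g g') (S : Sol σ τ u v (fun t => -(P t * g (u t))))
    (hu : ∀ t ∈ Ioo σ τ, 0 < u t) (h0 : u σ = 0) (h1 : u τ = 0) {l : ℝ} (hl : σ < l)
    (hl2 : l < (σ + τ) / 2) (hr : ∀ t ∈ Icc σ l, u t ≤ u (2 * l - t)) :
    (∃ κ > 0, ∀ t ∈ Icc σ l, κ * (l - t) ≤ u (2 * l - t) - u t) ∧ 0 < v l := by
  have hun : ∀ t ∈ Icc σ τ, 0 ≤ u t := by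
    intro t ht
    rcases ht.1.eq_or_lt with h | h
    · rw [← h, h0]
    rcases ht.2.eq_or_lt with h' | h'
    · rw [h', h1]
    exact (hu t ⟨h, h'⟩).le
  have S1 : Sol σ l u v _ := S.mono le_rfl hl.le (by linarith)
  have S2 := (S.mono (x' := l) (y' := 2 * l - σ) hl.le (by linarith) (by linarith)).reflect (2 * l)
  have e1 : 2 * l - (2 * l - σ) = σ := by ring
  have e2 : 2 * l - l = l := by ring
  rw [e1, e2] at S2
  have D := S2.add S1.neg
  have hPl : ∀ t ∈ Icc σ l, P t ≤ P (2 * l - t) := by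
    intro t ht
    rcases le_total (2 * l - t) ((σ + τ) / 2) with h | h
    · exact W.mono ⟨ht.1, by linarith [ht.2]⟩ ⟨by linarith [ht.2], h⟩ (by linarith [ht.2])
    · rw [← W.symm (2 * l - t)]
      exact W.mono ⟨ht.1, by linarith [ht.2]⟩ ⟨by linarith [ht.2, ht.1], by linarith⟩ (by linarith)
  have anti := D.v_anti (Eventually.of_forall fun t ht => by
    have ht' : t ∈ Icc σ l := ⟨ht.1.le, ht.2⟩
    have a1 := hPl t ht'
    have a2 := G.mono (hr t ht')
    have a3 : 0 ≤ P t := W.nonneg t ⟨ht'.1, by linarith [ht'.2]⟩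
    have a4 : 0 ≤ g (u t) := G.nonneg (hun t ⟨ht'.1, by linarith [ht'.2]⟩)
    have : P t * g (u t) ≤ P (2 * l - t) * g (u (2 * l - t)) := mul_le_mul a1 a2 a4 (a3.trans a1)
    linarith)
  have hσ : σ ∈ Icc σ l := ⟨le_rfl, hl.le⟩
  have hlm : l ∈ Icc σ l := ⟨hl.le, le_rfl⟩
  have dpos : 0 < u (2 * l - σ) := hu _ ⟨by linarith, by linarith⟩
  constructor
  · refine ⟨u (2 * l - σ) / (l - σ), div_pos dpos (by linarith), fun t ht => ?_⟩
    have := D.chord anti hσ hlm ht.1 ht.2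
    simp only [h0, e2] at this
    rw [div_mul_eq_mul_div, div_le_iff₀ (by linarith)]
    linarith
  · have := D.tangent' anti hlm hσ
    simp only [h0, e2] at this
    by_contra hv
    push Not at hv
    nlinarith

lemma mp_claim (W : Wt σ τ c P) (G : GG g g') (S : Sol σ τ u v (fun t => -(P t * g (u t))))
    (hu : ∀ t ∈ Ioo σ τ, 0 < u t) (h0 : u σ = 0) (h1 : u τ = 0) :
    0 < v σ ∧ ∀ t y, σ ≤ t → t ≤ y → t + y < σ + τ → u t ≤ u y := by
  have hlt := W.lt
  have hun : ∀ t ∈ Icc σ τ, 0 ≤ u t := by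
    intro t ht
    rcases ht.1.eq_or_lt with h | h
    · rw [← h, h0]
    rcases ht.2.eq_or_lt with h' | h'
    · rw [h', h1]
    exact (hu t ⟨h, h'⟩).le
  have anti := S.v_anti (Eventually.of_forall fun t ht => by
    have a3 : 0 ≤ P t := W.nonneg t ⟨ht.1.le, ht.2⟩
    have a4 : 0 ≤ g (u t) := G.nonneg (hun t ⟨ht.1.le, ht.2⟩)
    have := mul_nonneg a3 a4
    linarith)
  have hvσ : 0 < v σ := by
    have := S.tangent' anti (s := σ) (t := (σ + τ) / 2) ⟨le_rfl, hlt.le⟩ ⟨by linarith, by linarith⟩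
    have h2 := hu ((σ + τ) / 2) ⟨by linarith, by linarith⟩
    rw [h0] at this
    by_contra hv
    push Not at hv
    nlinarith
  refine ⟨hvσ, ?_⟩
  by_contra hcon
  push Not at hcon
  set T : Set ℝ := {l | ∃ t y, σ ≤ t ∧ t ≤ y ∧ t + y < σ + τ ∧ u y < u t ∧ l = t + y} with hT
  have Tne : T.Nonempty := by
    obtain ⟨t, y, a1, a2, a3, a4⟩ := hcon
    exact ⟨t + y, t, y, a1, a2, a3, a4, rfl⟩
  have Tb : BddBelow T := ⟨2 * σ, by rintro l ⟨t, y, a1, a2, a3, a4, rfl⟩; linarith⟩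
  set l0 := sInf T with hl0
  have hl0σ : 2 * σ ≤ l0 := le_csInf Tne (by rintro l ⟨t, y, a1, a2, a3, a4, rfl⟩; linarith)
  have hl0τ : l0 < σ + τ := by
    obtain ⟨l, hl⟩ := Tne
    have := csInf_le Tb hl
    obtain ⟨t, y, a1, a2, a3, a4, rfl⟩ := hl
    linarith
  have H0 : ∀ t y, σ ≤ t → t ≤ y → t + y < l0 → u t ≤ u y := by
    intro t y a1 a2 a3
    by_contra h
    push Not at h
    have := csInf_le Tb (show t + y ∈ T from ⟨t, y, a1, a2, by linarith, h, rfl⟩)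
    linarith
  set lam := l0 / 2 with hlam
  have e2 : 2 * lam = l0 := by rw [hlam]; ring
  have H1 : ∀ t ∈ Icc σ lam, u t ≤ u (2 * lam - t) := by
    intro t ht
    rcases ht.1.eq_or_lt with h | h
    · rw [← h, h0]; apply hun; constructor <;> linarith
    · by_contra hh
      push Not at hh
      have ct : ContinuousAt u t := (S.hd t ⟨ht.1, by linarith [ht.2]⟩).continuousAt
      have ev : ∀ᶠ s in 𝓝[<] t, u (2 * lam - t) < u s :=
        (ct.eventually (lt_mem_nhds hh)).filter_mono nhdsWithin_le_nhds
      have ev2 : ∀ᶠ s in 𝓝[<] t, s ∈ Ioo σ t := Ioo_mem_nhdsLT h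
      obtain ⟨s, a1, a2⟩ := (ev.and ev2).exists
      have := H0 s (2 * lam - t) a2.1.le (by linarith [a2.2, ht.2]) (by linarith [a2.2])
      linarith
  have key : (∃ κ > 0, ∀ t ∈ Icc σ lam, κ * (lam - t) ≤ u (2 * lam - t) - u t) ∧ 0 < v lam := by
    rcases (show σ ≤ lam by linarith).eq_or_lt with h | h
    · rw [← h]
      refine ⟨⟨1, one_pos, fun t ht => ?_⟩, hvσ⟩
      have : t = σ := le_antisymm ht.2 ht.1
      rw [this]; ring_nf; simp
    · exact refl_pos W G S hu h0 h1 h (by linarith) H1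
  obtain ⟨⟨κ, hκ, hK⟩, hvl⟩ := key
  have hlm : lam ∈ Icc σ τ := ⟨by linarith, by linarith⟩
  have cv := S.cv hlt.le
  obtain ⟨C, hC⟩ := isCompact_Icc.exists_bound_of_continuousOn cv
  have hC0 : 0 ≤ C := (norm_nonneg _).trans (hC lam hlm)
  have ev : ∀ᶠ s in 𝓝[Icc σ τ] lam, 0 < v s := (cv lam hlm).eventually (lt_mem_nhds hvl)
  obtain ⟨δ, hδ, hball⟩ := Metric.mem_nhdsWithin_iff.1 ev
  set η := δ / (1 + C / κ) with hη
  have hCκ : 0 ≤ C / κ := div_nonneg hC0 hκ.le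
  have hη0 : 0 < η := div_pos hδ (by positivity)
  have hηδ : η + C * η / κ = δ := by rw [hη]; field_simp
  obtain ⟨l, hlT, hll⟩ := exists_lt_of_csInf_lt Tne (show l0 < l0 + η by linarith)
  have hl1 := csInf_le Tb hlT
  obtain ⟨t, y, a1, a2, a3, a4, rfl⟩ := hlT
  have hty : t < y := lt_of_le_of_ne a2 (by rintro rfl; exact lt_irrefl _ a4)
  -- t is close to lam
  have tclose : lam - C * η / κ ≤ t := by
    by_contra hh
    push Not at hh
    have hCη : 0 ≤ C * η / κ := by positivity
    have htl : t ∈ Icc σ lam := ⟨a1, by linarith⟩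
    have b1 := hK t htl
    have m1 : 2 * lam - t ∈ Icc σ τ := ⟨by linarith, by linarith⟩
    have m2 : y ∈ Icc σ τ := ⟨by linarith, by linarith⟩
    have b2 : u (2 * lam - t) - u y ≤ C * η := by
      rcases (show 2 * lam - t ≤ y by rw [e2]; linarith).eq_or_lt with h | h
      · rw [h]; simp; positivity
      · obtain ⟨ξ, c1, c2⟩ := S.mvt m1 m2 h
        have c3 := abs_le.1 (hC ξ ⟨m1.1.trans c1.1.le, c1.2.le.trans m2.2⟩)
        have c4 : y - (2 * lam - t) ≤ η := by linarith
        have c5 : 0 ≤ y - (2 * lam - t) := by linarith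
        nlinarith [mul_le_mul_of_nonneg_left c4 hC0]
    have b3 : κ * (lam - t) < C * η := by linarith
    have b4 : C * η = κ * (C * η / κ) := by field_simp
    rw [b4] at b3
    have := lt_of_mul_lt_mul_left b3 hκ.le
    linarith
  have vpos : ∀ s ∈ Icc t y, 0 < v s := by
    intro s hs
    apply hball
    refine ⟨?_, by linarith [hs.1], by linarith [hs.2]⟩
    have : 0 ≤ C * η / κ := by positivity
    rw [Metric.mem_ball, Real.dist_eq, abs_lt]
    constructor
    · linarith [hs.1]
    · linarith [hs.2]
  obtain ⟨ξ, c1, c2⟩ := S.mvt (s := t) (t := y) ⟨a1, by linarith⟩ ⟨by linarith, by linarith⟩ hty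
  have := vpos ξ ⟨c1.1.le, c1.2.le⟩
  nlinarith

lemma mp_left (W : Wt σ τ c P) (G : GG g g') (S : Sol σ τ u v (fun t => -(P t * g (u t))))
    (hu : ∀ t ∈ Ioo σ τ, 0 < u t) (h0 : u σ = 0) (h1 : u τ = 0) :
    (∀ l ∈ Ico σ ((σ + τ) / 2), 0 < v l) ∧ 0 ≤ v ((σ + τ) / 2) := by
  have hlt := W.lt
  obtain ⟨a, b⟩ := mp_claim W G S hu h0 h1
  have A : ∀ l ∈ Ico σ ((σ + τ) / 2), 0 < v l := by
    intro l hl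
    rcases hl.1.eq_or_lt with h | h
    · rwa [← h]
    · exact (refl_pos W G S hu h0 h1 h hl.2 (fun t ht => b t _ ht.1 (by linarith [ht.2])
        (by linarith [hl.2]))).2
  refine ⟨A, ?_⟩
  by_contra hh
  push Not at hh
  have ev : ∀ᶠ s in 𝓝[Icc σ τ] ((σ + τ) / 2), v s < 0 :=
    (S.cv hlt.le _ ⟨by linarith, by linarith⟩).eventually (gt_mem_nhds hh)
  obtain ⟨δ, hδ, hball⟩ := Metric.mem_nhdsWithin_iff.1 ev
  have hs : max σ ((σ + τ) / 2 - δ / 2) ∈ Ico σ ((σ + τ) / 2) :=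
    ⟨le_max_left _ _, max_lt (by linarith) (by linarith)⟩
  have h1 := A _ hs
  have h2 : v (max σ ((σ + τ) / 2 - δ / 2)) < 0 := by
    apply hball
    refine ⟨?_, hs.1, by linarith [hs.2]⟩
    rw [Metric.mem_ball, Real.dist_eq, abs_lt]
    constructor
    · have := le_max_right σ ((σ + τ) / 2 - δ / 2); linarith
    · linarith [hs.2]
  linarith

/-- no positive bump of `w` in the left half -/
lemma no_bump (W : Wt σ τ c P) (G : GG g g') (S : Sol σ τ u v (fun t => -(P t * g (u t))))
    (hu : ∀ t ∈ Ioo σ τ, 0 < u t) (h0 : u σ = 0) (h1 : u τ = 0) {w z : ℝ → ℝ}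
    (Sw : Sol σ τ w z (fun t => -(P t * g' (u t) * w t))) {α β : ℝ} (ha : σ ≤ α) (hab : α < β)
    (hb : β ≤ (σ + τ) / 2) (hw : ∀ t ∈ Ioo α β, 0 < w t) (wa : w α = 0) (wb : w β = 0) : False := by
  have hlt := W.lt
  obtain ⟨A, B⟩ := mp_left W G S hu h0 h1
  have hun : ∀ t ∈ Icc σ τ, 0 ≤ u t := by
    intro t ht
    rcases ht.1.eq_or_lt with h | h
    · rw [← h, h0]
    rcases ht.2.eq_or_lt with h' | h'
    · rw [h', h1]
    exact (hu t ⟨h, h'⟩).le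
  have hwn : ∀ t ∈ Icc α β, 0 ≤ w t := by
    intro t ht
    rcases ht.1.eq_or_lt with h | h
    · rw [← h, wa]
    rcases ht.2.eq_or_lt with h' | h'
    · rw [h', wb]
    exact (hw t ⟨h, h'⟩).le
  have S1 : Sol α β u v _ := S.mono ha hab.le (by linarith)
  have S2 : Sol α β w z _ := Sw.mono ha hab.le (by linarith)
  have hsub : Icc α β ⊆ Icc σ τ := Icc_subset_Icc ha (by linarith)
  have anti := S2.v_anti (Eventually.of_forall fun t ht => by
    have m : t ∈ Icc α β := ⟨ht.1.le, ht.2⟩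
    have := mul_nonneg (mul_nonneg (W.nonneg t (hsub m)) (G.nonneg' (u t))) (hwn t m)
    linarith)
  have ma : α ∈ Icc α β := ⟨le_rfl, hab.le⟩
  have mb : β ∈ Icc α β := ⟨hab.le, le_rfl⟩
  have mm : (α + β) / 2 ∈ Icc α β := ⟨by linarith, by linarith⟩
  have wm := hw ((α + β) / 2) ⟨by linarith, by linarith⟩
  have za : 0 < z α := by
    have := S2.tangent' anti ma mm
    rw [wa] at this
    by_contra hh; push Not at hh; nlinarith
  have zb : z β ≤ 0 := by
    have := S2.tangent' anti mb mm
    rw [wb] at this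
    by_contra hh; push Not at hh; nlinarith
  have va : 0 < v α := A α ⟨ha, by linarith⟩
  have vb : 0 ≤ v β := by
    rcases hb.eq_or_lt with h | h
    · rw [h]; exact B
    · exact (A β ⟨by linarith, h⟩).le
  have e := S1.inc_vv hab.le S2
  have ml := mono_lemma (P := P) (φ := fun t => g (u t) * w t)
    (ψ := fun t => g' (u t) * v t * w t + g (u t) * z t) hab.le
    (W.mono.mono (Icc_subset_Icc ha hb))
    (fun t ht => ((G.hd (u t)).comp t (S1.hd t ht)).mul (S2.hd t ht))
    (by
      have c1 := S1.cu
      have c2 := S1.cv hab.le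
      have c3 := S2.cu
      have c4 := S2.cv hab.le
      exact ((G.cont.comp_continuousOn c1).mul c2 |>.mul c3).add ((G.cg.comp_continuousOn c1).mul c4))
    (fun t ht => mul_nonneg (G.nonneg (hun t (hsub ht))) (hwn t ht))
  have e2 : ∫ r in α..β, (-(P r * g (u r)) * z r + v r * -(P r * g' (u r) * w r)) =
      - ∫ t in α..β, P t * (g' (u t) * v t * w t + g (u t) * z t) := by
    rw [← intervalIntegral.integral_neg]
    congr 1; ext r; ring
  simp only [wa, wb] at ml
  nlinarith [mul_pos va za, mul_nonneg vb (neg_nonneg.2 zb)]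

end MP

lemma bump_exists {σ τ c0 : ℝ} {w : ℝ → ℝ} (hw : ContinuousOn w (Icc σ τ)) (w0 : w σ = 0)
    (w1 : w τ = 0) (hc : c0 ∈ Icc σ τ) (hpos : 0 < w c0) :
    ∃ α β, σ ≤ α ∧ α < c0 ∧ c0 < β ∧ β ≤ τ ∧ w α = 0 ∧ w β = 0 ∧ ∀ t ∈ Ioo α β, 0 < w t := by
  have cl : IsCompact (Icc σ c0 ∩ w ⁻¹' {0}) := by
    apply isCompact_Icc.of_isClosed_subset _ inter_subset_left
    exact (hw.mono (Icc_subset_Icc le_rfl hc.2)).preimage_isClosed_of_isClosed isClosed_Icc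
      isClosed_singleton
  have cr : IsCompact (Icc c0 τ ∩ w ⁻¹' {0}) := by
    apply isCompact_Icc.of_isClosed_subset _ inter_subset_left
    exact (hw.mono (Icc_subset_Icc hc.1 le_rfl)).preimage_isClosed_of_isClosed isClosed_Icc
      isClosed_singleton
  obtain ⟨α, ⟨⟨a1, a2⟩, a3⟩, a4⟩ := cl.exists_isGreatest ⟨σ, ⟨le_rfl, hc.1⟩, w0⟩
  obtain ⟨β, ⟨⟨b1, b2⟩, b3⟩, b4⟩ := cr.exists_isLeast ⟨τ, ⟨hc.2, le_rfl⟩, w1⟩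
  simp only [mem_preimage, mem_singleton_iff] at a3 b3
  have ha : α < c0 := lt_of_le_of_ne a2 (by rintro rfl; linarith)
  have hb : c0 < β := lt_of_le_of_ne b1 (by rintro rfl; linarith)
  refine ⟨α, β, a1, ha, hb, b2, a3, b3, fun t ht => ?_⟩
  by_contra hh
  push Not at hh
  rcases le_total t c0 with h | h
  · obtain ⟨s, hs, hs0⟩ := intermediate_value_Icc h
      (hw.mono (Icc_subset_Icc (by linarith [ht.1]) hc.2)) (show (0 : ℝ) ∈ Icc (w t) (w c0) from ⟨hh, hpos.le⟩)
    have := a4 ⟨⟨by linarith [hs.1, ht.1], hs.2⟩, hs0⟩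
    linarith [hs.1, ht.1]
  · obtain ⟨s, hs, hs0⟩ := intermediate_value_Icc' h
      (hw.mono (Icc_subset_Icc hc.1 (by linarith [ht.2]))) (show (0 : ℝ) ∈ Icc (w t) (w c0) from ⟨hh, hpos.le⟩)
    have := b4 ⟨⟨hs.1, by linarith [hs.2, ht.2]⟩, hs0⟩
    linarith [hs.2, ht.2]

section L
variable {σ τ c : ℝ} {P g g' u v : ℝ → ℝ}

lemma bump_mid (W : Wt σ τ c P) (G : GG g g') (S : Sol σ τ u v (fun t => -(P t * g (u t))))
    (hu : ∀ t ∈ Ioo σ τ, 0 < u t) (h0 : u σ = 0) (h1 : u τ = 0) {w z : ℝ → ℝ}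
    (Sw : Sol σ τ w z (fun t => -(P t * g' (u t) * w t))) {α β : ℝ} (ha : σ ≤ α) (hab : α < β)
    (hb : β ≤ τ) (hw : ∀ t ∈ Ioo α β, 0 < w t) (wa : w α = 0) (wb : w β = 0) :
    α < (σ + τ) / 2 ∧ (σ + τ) / 2 < β := by
  constructor
  · by_contra hh
    push Not at hh
    have S' := S.reflect'
    have Sw' := Sw.reflect'
    simp only [W.symm] at S' Sw'
    refine no_bump W G S' (fun t ht => hu _ ⟨by linarith [ht.2], by linarith [ht.1]⟩) (by simpa using h1)
      (by simpa using h0) Sw' (α := σ + τ - β) (β := σ + τ - α) (by linarith) (by linarith)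
      (by linarith) (fun t ht => hw _ ⟨by linarith [ht.2], by linarith [ht.1]⟩)
      (by simpa using wb) (by simpa using wa)
  · by_contra hh
    push Not at hh
    exact no_bump W G S hu h0 h1 Sw ha hab hh hw wa wb

lemma bump_slopes (W : Wt σ τ c P) (G : GG g g') {w z : ℝ → ℝ}
    (Sw : Sol σ τ w z (fun t => -(P t * g' (u t) * w t))) {α β : ℝ} (ha : σ ≤ α) (hab : α < β)
    (hb : β ≤ τ) (hw : ∀ t ∈ Ioo α β, 0 < w t) (wa : w α = 0) (wb : w β = 0) :
    0 < z α ∧ z β < 0 := by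
  have hwn : ∀ t ∈ Icc α β, 0 ≤ w t := by
    intro t ht
    rcases ht.1.eq_or_lt with h | h
    · rw [← h, wa]
    rcases ht.2.eq_or_lt with h' | h'
    · rw [h', wb]
    exact (hw t ⟨h, h'⟩).le
  have S2 : Sol α β w z _ := Sw.mono ha hab.le hb
  have hsub : Icc α β ⊆ Icc σ τ := Icc_subset_Icc ha hb
  have anti := S2.v_anti (Eventually.of_forall fun t ht => by
    have m : t ∈ Icc α β := ⟨ht.1.le, ht.2⟩
    have := mul_nonneg (mul_nonneg (W.nonneg t (hsub m)) (G.nonneg' (u t))) (hwn t m)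
    linarith)
  have ma : α ∈ Icc α β := ⟨le_rfl, hab.le⟩
  have mb : β ∈ Icc α β := ⟨hab.le, le_rfl⟩
  have mm : (α + β) / 2 ∈ Icc α β := ⟨by linarith, by linarith⟩
  have wm := hw ((α + β) / 2) ⟨by linarith, by linarith⟩
  constructor
  · have := S2.tangent' anti ma mm
    rw [wa] at this
    by_contra hh; push Not at hh; nlinarith
  · have := S2.tangent' anti mb mm
    rw [wb] at this
    by_contra hh; push Not at hh; nlinarith

lemma L_pos (W : Wt σ τ c P) (G : GG g g') (S : Sol σ τ u v (fun t => -(P t * g (u t))))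
    (hu : ∀ t ∈ Ioo σ τ, 0 < u t) (h0 : u σ = 0) (h1 : u τ = 0) {w z : ℝ → ℝ}
    (Sw : Sol σ τ w z (fun t => -(P t * g' (u t) * w t))) (w0 : w σ = 0) (w1 : w τ = 0) :
    ∀ t ∈ Icc σ τ, w t ≤ 0 := by
  intro t0 ht0
  by_contra hpos
  push Not at hpos
  have hlt := W.lt
  obtain ⟨α, β, a1, a2, b1, b2, wa, wb, hw⟩ := bump_exists Sw.cu w0 w1 ht0 hpos
  have hab : α < β := a2.trans b1
  obtain ⟨za, zb⟩ := bump_slopes W G Sw a1 hab b2 hw wa wb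
  obtain ⟨m1, m2⟩ := bump_mid W G S hu h0 h1 Sw a1 hab b2 hw wa wb
  have Swn : Sol σ τ (fun t => - w t) (fun t => - z t) (fun t => -(P t * g' (u t) * (- w t))) := by
    have := Sw.neg
    simpa using this
  -- α = σ
  have hα : α = σ := by
    by_contra hne
    have hσα : σ < α := lt_of_le_of_ne a1 (Ne.symm hne)
    have hd := Sw.hd α ⟨a1, by linarith⟩
    have ev : ∀ᶠ s in 𝓝[<] α, w s < 0 := by
      have h2 := (hasDerivWithinAt_iff_tendsto_slope' (by simp)).1 (hd.hasDerivWithinAt (s := Iio α))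
      have h3 := h2.eventually (lt_mem_nhds za)
      filter_upwards [h3, self_mem_nhdsWithin] with s hs hs'
      rw [slope_def_field, wa] at hs
      have : s - α < 0 := sub_neg.2 hs'
      by_contra hh
      push Not at hh
      have : (w s - 0) / (s - α) ≤ 0 := div_nonpos_of_nonneg_of_nonpos (by linarith) this.le
      linarith
    obtain ⟨s, hs1, hs2⟩ := (ev.and (show ∀ᶠ s in 𝓝[<] α, s ∈ Ioo σ α from Ioo_mem_nhdsLT hσα)).exists
    obtain ⟨α', β', c1, c2, d1, d2, wa', wb', hw'⟩ := bump_exists (c0 := s) Swn.cu (by simp [w0])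
      (by simp [w1]) ⟨hs2.1.le, by linarith [hs2.2]⟩ (by linarith)
    have mid := (bump_mid W G S hu h0 h1 Swn c1 (c2.trans d1) d2 hw' wa' wb').2
    have := hw' α ⟨by linarith [hs2.2], by linarith⟩
    simp [wa] at this
  have hβ : β = τ := by
    by_contra hne
    have hσα : β < τ := lt_of_le_of_ne b2 hne
    have hd := Sw.hd β ⟨by linarith, b2⟩
    have ev : ∀ᶠ s in 𝓝[>] β, w s < 0 := by
      have h2 := (hasDerivWithinAt_iff_tendsto_slope' (by simp)).1 (hd.hasDerivWithinAt (s := Ioi β))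
      have h3 := h2.eventually (gt_mem_nhds zb)
      filter_upwards [h3, self_mem_nhdsWithin] with s hs hs'
      rw [slope_def_field, wb] at hs
      have : 0 < s - β := sub_pos.2 hs'
      by_contra hh
      push Not at hh
      have : 0 ≤ (w s - 0) / (s - β) := div_nonneg (by linarith) this.le
      linarith
    obtain ⟨s, hs1, hs2⟩ := (ev.and (show ∀ᶠ s in 𝓝[>] β, s ∈ Ioo β τ from Ioo_mem_nhdsGT hσα)).exists
    obtain ⟨α', β', c1, c2, d1, d2, wa', wb', hw'⟩ := bump_exists (c0 := s) Swn.cu (by simp [w0])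
      (by simp [w1]) ⟨by linarith [hs2.1], hs2.2.le⟩ (by linarith)
    have mid := (bump_mid W G S hu h0 h1 Swn c1 (c2.trans d1) d2 hw' wa' wb').1
    have := hw' β ⟨by linarith, by linarith [hs2.1]⟩
    simp [wb] at this
  subst hα hβ
  have e1 := S.inc_uv hlt.le Sw
  have e2 := Sw.inc_uv hlt.le S
  rw [h0, h1] at e1
  rw [w0, w1] at e2
  have huI : ContinuousOn u (uIcc α β) := by rw [uIcc_of_le hlt.le]; exact S.cu
  have hwI : ContinuousOn w (uIcc α β) := by rw [uIcc_of_le hlt.le]; exact Sw.cu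
  have hvI : ContinuousOn v (uIcc α β) := by rw [uIcc_of_le hlt.le]; exact S.cv hlt.le
  have hzI : ContinuousOn z (uIcc α β) := by rw [uIcc_of_le hlt.le]; exact Sw.cv hlt.le
  have i1 : IntervalIntegrable (fun r => v r * z r + u r * -(P r * g' (u r) * w r)) volume α β :=
    ((hvI.mul hzI).intervalIntegrable).add (Sw.int.continuousOn_mul huI)
  have i2 : IntervalIntegrable (fun r => z r * v r + w r * -(P r * g (u r))) volume α β :=
    ((hzI.mul hvI).intervalIntegrable).add (S.int.continuousOn_mul hwI)
  have e3 : ∫ r in α..β, ((z r * v r + w r * -(P r * g (u r))) -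
      (v r * z r + u r * -(P r * g' (u r) * w r))) = 0 := by
    rw [intervalIntegral.integral_sub i2 i1, ← e1, ← e2]; simp
  have hun : ∀ t ∈ Icc α β, 0 ≤ u t := by
    intro t ht
    rcases ht.1.eq_or_lt with h | h
    · rw [← h, h0]
    rcases ht.2.eq_or_lt with h' | h'
    · rw [h', h1]
    exact (hu t ⟨h, h'⟩).le
  have hwn : ∀ t ∈ Icc α β, 0 ≤ w t := by
    intro t ht
    rcases ht.1.eq_or_lt with h | h
    · rw [← h, wa]
    rcases ht.2.eq_or_lt with h' | h'
    · rw [h', wb]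
    exact (hw t ⟨h, h'⟩).le
  have pos := int_pos' (x := α) (y := β) (c := c) (d := α + β - c) W.c1.le (by linarith [W.c2])
    (by linarith [W.c1]) (i2.sub i1) (fun t ht => by
      have a1 := G.sup_le (hun t ht)
      have a2 := mul_nonneg (mul_nonneg (W.nonneg t ht) (hwn t ht)) (sub_nonneg.2 a1)
      linarith) (fun t ht => by
      have m : t ∈ Ioo α β := ⟨by linarith [ht.1, W.c1], by linarith [ht.2, W.c1]⟩
      have a1 := G.sup _ (hu t m)
      have a3 := W.pos.trans_le (W.ge ht.1.le ht.2.le)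
      have a2 := mul_pos (mul_pos a3 (hw t m)) (sub_pos.2 a1)
      linarith)
  linarith

theorem L_thm (W : Wt σ τ c P) (G : GG g g') (S : Sol σ τ u v (fun t => -(P t * g (u t))))
    (hu : ∀ t ∈ Ioo σ τ, 0 < u t) (h0 : u σ = 0) (h1 : u τ = 0) {w z : ℝ → ℝ}
    (Sw : Sol σ τ w z (fun t => -(P t * g' (u t) * w t))) (w0 : w σ = 0) (w1 : w τ = 0) :
    ∀ t ∈ Icc σ τ, w t = 0 := by
  intro t ht
  have Swn : Sol σ τ (fun t => - w t) (fun t => - z t) (fun t => -(P t * g' (u t) * (- w t))) := by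
    have := Sw.neg
    simpa using this
  have a := L_pos W G S hu h0 h1 Sw w0 w1 t ht
  have b := L_pos W G S hu h0 h1 Swn (by simp [w0]) (by simp [w1]) t ht
  linarith
end L

lemma apriori {σ τ c : ℝ} {P g g' : ℝ → ℝ} (W : Wt σ τ c P) (G : GG g g') :
    ∃ R > 0, ∀ u v : ℝ → ℝ, Sol σ τ u v (fun t => -(P t * g (u t))) →
      (∀ t ∈ Icc σ τ, 0 ≤ u t) → ∀ t ∈ Icc σ τ, u t ≤ R := by
  have hlt := W.lt
  have hc1 := W.c1
  have hc2 := W.c2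
  have hPc := W.pos
  set e := c - σ with he
  set l := τ - σ with hl
  set D := σ + τ - c - c with hD
  have he0 : 0 < e := by linarith
  have hl0 : 0 < l := by linarith
  have hD0 : 0 < D := by linarith
  set K := 2 * l / (e ^ 2 * P c * D) + 1 with hK
  have hK0 : 0 < K := by positivity
  obtain ⟨S0, hS0⟩ := (tendsto_atTop_atTop.1 G.infty) K
  set S1 := max S0 1 with hS1
  have hS1p : 0 < S1 := lt_of_lt_of_le one_pos (le_max_right _ _)
  refine ⟨S1 * l / e, by positivity, fun u v S hun => ?_⟩
  have anti := S.v_anti (Eventually.of_forall fun t ht => by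
    have a3 : 0 ≤ P t := W.nonneg t ⟨ht.1.le, ht.2⟩
    have a4 : 0 ≤ g (u t) := G.nonneg (hun t ⟨ht.1.le, ht.2⟩)
    have := mul_nonneg a3 a4
    linarith)
  obtain ⟨t0, ht0, hmax⟩ := isCompact_Icc.exists_isMaxOn ⟨σ, left_mem_Icc.2 hlt.le⟩ S.cu
  have hmax : ∀ t ∈ Icc σ τ, u t ≤ u t0 := fun t ht => hmax ht
  intro t1 ht1
  refine (hmax t1 ht1).trans ?_
  by_contra hcon
  push Not at hcon
  set M := u t0 with hM
  have hM0 : 0 < M := lt_trans (by positivity) hcon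
  have mσ : σ ∈ Icc σ τ := left_mem_Icc.2 hlt.le
  have mτ : τ ∈ Icc σ τ := right_mem_Icc.2 hlt.le
  have mc : c ∈ Icc σ τ := ⟨by linarith, by linarith⟩
  have md : σ + τ - c ∈ Icc σ τ := ⟨by linarith, by linarith⟩
  have low : ∀ t ∈ Icc c (σ + τ - c), M * e / l ≤ u t := by
    intro t ht
    have mt : t ∈ Icc σ τ := ⟨by linarith [ht.1], by linarith [ht.2]⟩
    rw [div_le_iff₀ hl0]
    have p := hun t mt
    rcases le_total t t0 with h | h
    · have := S.chord anti mσ ht0 mt.1 h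
      have q := mul_nonneg (hun σ mσ) (sub_nonneg.2 h)
      have q2 : u t * (t0 - σ) ≤ u t * l := by
        apply mul_le_mul_of_nonneg_left _ p; linarith [ht0.2]
      have q3 : M * e ≤ M * (t - σ) := by apply mul_le_mul_of_nonneg_left _ hM0.le; linarith [ht.1]
      linarith
    · have := S.chord anti ht0 mτ h mt.2
      have q := mul_nonneg (hun τ mτ) (sub_nonneg.2 h)
      have q2 : u t * (τ - t0) ≤ u t * l := by
        apply mul_le_mul_of_nonneg_left _ p; linarith [ht0.1]
      have q3 : M * e ≤ M * (τ - t) := by apply mul_le_mul_of_nonneg_left _ hM0.le; linarith [ht.2]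
      linarith
  have big : S1 ≤ M * e / l := by
    rw [le_div_iff₀ hl0]
    rw [div_lt_iff₀ he0] at hcon
    linarith
  have gl : ∀ t ∈ Icc c (σ + τ - c), P c * (K * (M * e / l)) ≤ P t * g (u t) := by
    intro t ht
    have h1 := low t ht
    have h2 : S1 ≤ u t := big.trans h1
    have h3 : 0 < u t := hS1p.trans_le h2
    have h4 := hS0 (u t) ((le_max_left _ _).trans h2)
    rw [le_div_iff₀ h3] at h4
    have h5 : K * (M * e / l) ≤ g (u t) := (mul_le_mul_of_nonneg_left h1 hK0.le).trans h4
    have h6 := W.ge ht.1 ht.2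
    exact mul_le_mul h6 h5 (by positivity) (hPc.le.trans h6)
  have hcd : c ≤ σ + τ - c := by linarith
  have e1 := S.eq c mc _ md
  have e2 : ∫ r in c..(σ + τ - c), -(P r * g (u r)) ≤ ∫ r in c..(σ + τ - c), -(P c * (K * (M * e / l))) := by
    apply intervalIntegral.integral_mono_on hcd (ii_sub S.int mc md) (by simp)
    intro t ht
    exact neg_le_neg (gl t ht)
  rw [← e1, intervalIntegral.integral_const, smul_eq_mul] at e2
  have t1 := S.tangent' anti mc mσ
  have t2 := S.tangent' anti md mτ
  have n1 := hun σ mσ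
  have n2 := hun τ mτ
  have n3 := hmax c mc
  have n4 := hmax _ md
  have f1 : v c * e ≤ M := by rw [he]; linarith
  have f2 : - v (σ + τ - c) * e ≤ M := by rw [he]; linarith
  have f3 : D * (P c * (K * (M * e / l))) ≤ v c - v (σ + τ - c) := by linarith
  have f4 : D * (P c * (K * (M * e / l))) * e ≤ 2 * M := by
    nlinarith [mul_le_mul_of_nonneg_right f3 he0.le]
  have f5 : D * (P c * (K * (M * e / l))) * e = M * (2 + e ^ 2 * P c * D / l) := by
    rw [hK]; field_simp
  rw [f5] at f4
  have : 0 < e ^ 2 * P c * D / l := by positivity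
  nlinarith

lemma slope_bd {x y R : ℝ} (hxy : x < y) {u v f Q : ℝ → ℝ} (S : Sol x y u v f)
    (hR : ∀ t ∈ Icc x y, |u t| ≤ R) (hQ : IntervalIntegrable Q volume x y)
    (hf : ∀ t ∈ Icc x y, |f t| ≤ Q t) : ∀ t ∈ Icc x y, |v t| ≤ 2 * R / (y - x) + ∫ r in x..y, Q r := by
  intro t ht
  have mx : x ∈ Icc x y := left_mem_Icc.2 hxy.le
  have my : y ∈ Icc x y := right_mem_Icc.2 hxy.le
  obtain ⟨ξ, h1, h2⟩ := S.mvt mx my hxy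
  have mξ : ξ ∈ Icc x y := ⟨h1.1.le, h1.2.le⟩
  have e := S.eq ξ mξ t ht
  have a1 : |v ξ| ≤ 2 * R / (y - x) := by
    have h3 : v ξ = (u y - u x) / (y - x) := by
      rw [h2]; field_simp [(sub_pos.2 hxy).ne']
    rw [h3, abs_div, abs_of_pos (sub_pos.2 hxy)]
    apply div_le_div_of_nonneg_right _ (sub_pos.2 hxy).le
    have b1 := abs_le.1 (hR x mx)
    have b2 := abs_le.1 (hR y my)
    rw [abs_le]; constructor <;> linarith
  have a2 : |v t - v ξ| ≤ ∫ r in x..y, Q r := by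
    rw [e]
    have b1 : ‖∫ r in ξ..t, f r‖ ≤ ∫ r in uIoc ξ t, ‖f r‖ :=
      intervalIntegral.norm_integral_le_integral_norm_uIoc
    have hsub : uIoc ξ t ⊆ Ioc x y := by
      intro r hr
      rcases le_total ξ t with h | h
      · rw [uIoc_of_le h] at hr; exact ⟨mξ.1.trans_lt hr.1, hr.2.trans ht.2⟩
      · rw [uIoc_of_ge h] at hr; exact ⟨ht.1.trans_lt hr.1, hr.2.trans mξ.2⟩
    have i1 : IntegrableOn (fun r => ‖f r‖) (Ioc x y) :=
      ((intervalIntegrable_iff_integrableOn_Ioc_of_le hxy.le).1 S.int).norm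
    have b2 : ∫ r in uIoc ξ t, ‖f r‖ ≤ ∫ r in Ioc x y, ‖f r‖ :=
      setIntegral_mono_set i1 (Eventually.of_forall fun r => norm_nonneg _)
        (LE.le.eventuallyLE hsub)
    have b3 : ∫ r in x..y, ‖f r‖ ≤ ∫ r in x..y, Q r :=
      intervalIntegral.integral_mono_on hxy.le S.int.norm hQ (fun r hr => hf r hr)
    rw [intervalIntegral.integral_of_le hxy.le] at b3
    exact b1.trans (b2.trans b3)
  have : v t = v ξ + (v t - v ξ) := by ring
  rw [this]
  exact (abs_add_le _ _).trans (add_le_add a1 a2)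

lemma Sol.sq {x y : ℝ} (hxy : x ≤ y) {w z f : ℝ → ℝ} (S : Sol x y w z f) :
    Sol x y (fun t => w t * w t) (fun t => 2 * (w t * z t)) (fun t => 2 * (z t * z t + w t * f t)) := by
  have cw : ContinuousOn w (uIcc x y) := by rw [uIcc_of_le hxy]; exact S.cu
  have cz : ContinuousOn z (uIcc x y) := by rw [uIcc_of_le hxy]; exact S.cv hxy
  refine ⟨fun t ht => ?_, ?_, ?_⟩
  · exact ((S.hd t ht).fun_mul (S.hd t ht)).congr_deriv (by ring)
  · exact (((cz.mul cz).intervalIntegrable).add (S.int.continuousOn_mul cw)).const_mul 2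
  · have key : ∀ s ∈ Icc x y, ∀ t ∈ Icc x y, s ≤ t → 2 * (w t * z t) - 2 * (w s * z s) =
        ∫ r in s..t, 2 * (z r * z r + w r * f r) := by
      intro s hs t ht hst
      have S' := S.mono hs.1 hst ht.2
      have := S'.inc_uv hst S'
      rw [intervalIntegral.integral_const_mul, ← this]; ring
    intro s hs t ht
    rcases le_total s t with h | h
    · exact key s hs t ht h
    · rw [intervalIntegral.integral_symm, ← key t ht s hs h]; ring

structure NegL (σ L : ℝ) (n : ℝ → ℝ) : Prop where
  L0 : 0 < L
  nonneg : ∀ t, 0 ≤ n t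
  int : IntervalIntegrable n volume (σ - L) σ
  pos : ∀ δ > 0, δ ≤ L → 0 < ∫ t in (σ - δ)..σ, n t

lemma U_left {σ L R C ε : ℝ} {n g g' : ℝ → ℝ} (N : NegL σ L n) (G : GG g g') (hC : 0 < C)
    (hR : 0 < R) (hε : 0 < ε) : ∃ μ0 > 0, ∀ μ > μ0, ∀ u v : ℝ → ℝ,
      Sol (σ - L) σ u v (fun t => μ * n t * g (u t)) → (∀ t ∈ Icc (σ - L) σ, 0 ≤ u t) →
      (∀ t ∈ Icc (σ - L) σ, u t ≤ R) → v σ ≤ C → u σ ≤ ε := by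
  have hL := N.L0
  set δ := min (L / 2) (ε / (2 * C)) with hδ
  have hδ0 : 0 < δ := lt_min (by positivity) (by positivity)
  have hδL : δ ≤ L / 2 := min_le_left _ _
  have hδC : C * δ ≤ ε / 2 := by
    have : δ ≤ ε / (2 * C) := min_le_right _ _
    calc C * δ ≤ C * (ε / (2 * C)) := mul_le_mul_of_nonneg_left this hC.le
      _ = ε / 2 := by field_simp
  have hI := N.pos δ hδ0 (by linarith)
  set I := ∫ t in (σ - δ)..σ, n t with hIdef
  have hge := G.pos (ε / 2) (by positivity)
  refine ⟨(C + R / δ) / (g (ε / 2) * I), by positivity, fun μ hμ u v S hu0 huR hvC => ?_⟩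
  by_contra hcon
  push Not at hcon
  have hμ0 : 0 < μ := lt_trans (by positivity) hμ
  have mono := S.v_mono (Eventually.of_forall fun t ht =>
    mul_nonneg (mul_nonneg hμ0.le (N.nonneg t)) (G.nonneg (hu0 t ⟨ht.1.le, ht.2⟩)))
  have mσ : σ ∈ Icc (σ - L) σ := ⟨by linarith, le_rfl⟩
  have m1 : σ - δ ∈ Icc (σ - L) σ := ⟨by linarith, by linarith⟩
  have m2 : σ - 2 * δ ∈ Icc (σ - L) σ := ⟨by linarith, by linarith⟩
  have t1 := S.tangent mono m1 m2
  have t2 : - v (σ - δ) ≤ R / δ := by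
    rw [le_div_iff₀ hδ0]
    have := hu0 _ m1
    have := huR _ m2
    linarith
  have low : ∀ t ∈ Icc (σ - δ) σ, g (ε / 2) ≤ g (u t) := by
    intro t ht
    apply G.mono
    have := S.tangent mono mσ (t := t) ⟨by linarith [ht.1], ht.2⟩
    have h1 : v σ * (σ - t) ≤ C * δ := by
      have a1 : σ - t ≤ δ := by linarith [ht.1]
      have a2 : 0 ≤ σ - t := by linarith [ht.2]
      calc v σ * (σ - t) ≤ C * (σ - t) := mul_le_mul_of_nonneg_right hvC a2
        _ ≤ C * δ := mul_le_mul_of_nonneg_left a1 hC.le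
    linarith
  have e1 := S.eq _ m1 _ mσ
  have in1 : IntervalIntegrable n volume (σ - δ) σ := ii_sub N.int m1 mσ
  have e2 : ∫ t in (σ - δ)..σ, (μ * g (ε / 2)) * n t ≤ ∫ t in (σ - δ)..σ, μ * n t * g (u t) := by
    apply intervalIntegral.integral_mono_on (by linarith) (in1.const_mul _) (ii_sub S.int m1 mσ)
    intro t ht
    have := mul_le_mul_of_nonneg_left (low t ht) (mul_nonneg hμ0.le (N.nonneg t))
    linarith
  rw [intervalIntegral.integral_const_mul, ← e1] at e2
  have hμ' : (C + R / δ) < μ * (g (ε / 2) * I) := by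
    rwa [gt_iff_lt, div_lt_iff₀ (by positivity)] at hμ
  linarith

lemma W_left {σ L C c ε : ℝ} {n g g' : ℝ → ℝ} (N : NegL σ L n) (G : GG g g') (hC : 0 < C)
    (hc : 0 < c) (hε : 0 < ε) : ∃ η > 0, ∀ μ > 0, ∀ u v w z : ℝ → ℝ,
      Sol (σ - L) σ u v (fun t => μ * n t * g (u t)) → (∀ t ∈ Icc (σ - L) σ, 0 ≤ u t) →
      c ≤ v σ → 0 < u σ → u σ ≤ η →
      Sol (σ - L) σ w z (fun t => μ * n t * g' (u t) * w t) → (∀ t ∈ Icc (σ - L) σ, |w t| ≤ 1) →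
      |z σ| ≤ C → |w σ| ≤ ε := by
  have hL := N.L0
  set δ := min (L / 2) (ε ^ 2 / (4 * C)) with hδ
  have hδ0 : 0 < δ := lt_min (by positivity) (by positivity)
  have hδL : δ ≤ L / 2 := min_le_left _ _
  have hδC : 2 * C * δ ≤ ε ^ 2 / 2 := by
    have : δ ≤ ε ^ 2 / (4 * C) := min_le_right _ _
    calc 2 * C * δ ≤ 2 * C * (ε ^ 2 / (4 * C)) := mul_le_mul_of_nonneg_left this (by positivity)
      _ = ε ^ 2 / 2 := by field_simp; ring
  refine ⟨min (c * δ / 2) (ε ^ 2 * c / (4 * (2 * C + 1 / δ))), lt_min (by positivity) (by positivity),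
    fun μ hμ u v w z S hu0 hcv huσ huη Sw hw1 hzC => ?_⟩
  by_contra hcon
  push Not at hcon
  have hη1 : u σ ≤ c * δ / 2 := huη.trans (min_le_left _ _)
  have hη2 : u σ ≤ ε ^ 2 * c / (4 * (2 * C + 1 / δ)) := huη.trans (min_le_right _ _)
  have mono := S.v_mono (Eventually.of_forall fun t ht =>
    mul_nonneg (mul_nonneg hμ.le (N.nonneg t)) (G.nonneg (hu0 t ⟨ht.1.le, ht.2⟩)))
  have hLσ : σ - L ≤ σ := by linarith
  have Y := Sw.sq hLσ
  have fnn : ∀ t, 0 ≤ 2 * (z t * z t + w t * (μ * n t * g' (u t) * w t)) := fun t => by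
    have a1 := mul_nonneg (mul_nonneg hμ.le (N.nonneg t)) (G.nonneg' (u t))
    nlinarith [mul_self_nonneg (z t), mul_nonneg a1 (mul_self_nonneg (w t))]
  have Ymono := Y.v_mono (Eventually.of_forall fun t ht => fnn t)
  have mσ : σ ∈ Icc (σ - L) σ := ⟨by linarith, le_rfl⟩
  have m1 : σ - δ ∈ Icc (σ - L) σ := ⟨by linarith, by linarith⟩
  have m2 : σ - 2 * δ ∈ Icc (σ - L) σ := ⟨by linarith, by linarith⟩
  have hww : ∀ t ∈ Icc (σ - L) σ, w t * w t ≤ 1 := fun t ht => by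
    have := hw1 t ht
    rw [← abs_mul_abs_self]; nlinarith [abs_nonneg (w t)]
  have hY' : 2 * (w σ * z σ) ≤ 2 * C := by
    have a1 : w σ * z σ ≤ |w σ * z σ| := le_abs_self _
    rw [abs_mul] at a1
    have := mul_le_mul (hw1 σ mσ) hzC (abs_nonneg _) zero_le_one
    linarith
  have yσ : ε ^ 2 < w σ * w σ := by
    rw [← abs_mul_abs_self]; nlinarith
  have t1 := Y.tangent Ymono m1 m2
  have t2 : - (2 * (w (σ - δ) * z (σ - δ))) ≤ 1 / δ := by
    rw [le_div_iff₀ hδ0]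
    have := hww _ m2
    have := mul_self_nonneg (w (σ - δ))
    linarith
  have low : ∀ t ∈ Icc (σ - δ) σ, ε ^ 2 / 2 ≤ w t * w t := by
    intro t ht
    have := Y.tangent Ymono mσ (t := t) ⟨by linarith [ht.1], ht.2⟩
    have h1 : 2 * (w σ * z σ) * (σ - t) ≤ 2 * C * δ := by
      have a1 : σ - t ≤ δ := by linarith [ht.1]
      have a2 : 0 ≤ σ - t := by linarith [ht.2]
      calc 2 * (w σ * z σ) * (σ - t) ≤ 2 * C * (σ - t) := mul_le_mul_of_nonneg_right hY' a2
        _ ≤ 2 * C * δ := mul_le_mul_of_nonneg_left a1 (by positivity)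
    linarith
  -- choose s
  have v1 : v (σ - δ) ≤ c / 2 := by
    have := S.tangent mono m1 mσ
    have := hu0 _ m1
    by_contra hh
    push Not at hh
    nlinarith
  obtain ⟨s, hs, hvs⟩ := intermediate_value_Icc (show σ - δ ≤ σ by linarith)
    ((S.cv hLσ).mono (Icc_subset_Icc m1.1 le_rfl)) (show c / 2 ∈ Icc (v (σ - δ)) (v σ) from ⟨v1, by linarith⟩)
  have ms : s ∈ Icc (σ - L) σ := ⟨by linarith [hs.1], hs.2⟩
  have ule : ∀ t ∈ Icc s σ, u t ≤ u σ := by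
    intro t ht
    have mt : t ∈ Icc (σ - L) σ := ⟨ms.1.trans ht.1, ht.2⟩
    have a1 := mono ms mt ht.1
    have a2 := S.tangent mono mt mσ
    have : 0 ≤ v t * (σ - t) := mul_nonneg (by linarith) (by linarith [ht.2])
    linarith
  have e1 := S.eq s ms σ mσ
  have e2 := Y.eq s ms σ mσ
  have e3 : ∫ t in s..σ, (ε ^ 2 / u σ) * (μ * n t * g (u t)) ≤
      ∫ t in s..σ, 2 * (z t * z t + w t * (μ * n t * g' (u t) * w t)) := by
    apply intervalIntegral.integral_mono_on hs.2 ((ii_sub S.int ms mσ).const_mul _) (ii_sub Y.int ms mσ)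
    intro t ht
    have mt : t ∈ Icc (σ - L) σ := ⟨ms.1.trans ht.1, ht.2⟩
    have b1 : g (u t) ≤ g' (u t) * u σ := (G.sup_le (hu0 t mt)).trans
      (mul_le_mul_of_nonneg_left (ule t ht) (G.nonneg' _))
    have b2 := low t ⟨hs.1.trans ht.1, ht.2⟩
    have b3 : 0 ≤ μ * n t := mul_nonneg hμ.le (N.nonneg t)
    have b4 : (ε ^ 2 / u σ) * (μ * n t * g (u t)) ≤ (ε ^ 2 / u σ) * (μ * n t * (g' (u t) * u σ)) := by
      gcongr
    have b5 : (ε ^ 2 / u σ) * (μ * n t * (g' (u t) * u σ)) = ε ^ 2 * (μ * n t * g' (u t)) := by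
      field_simp
    have b6 := mul_le_mul_of_nonneg_right b2 (mul_nonneg b3 (G.nonneg' (u t)))
    nlinarith [mul_self_nonneg (z t)]
  rw [intervalIntegral.integral_const_mul, ← e1, ← e2] at e3
  have e4 := Ymono m1 ms hs.1
  simp only at e4
  have f1 : (ε ^ 2 / u σ) * (c / 2) ≤ 2 * C + 1 / δ := by
    have : (ε ^ 2 / u σ) * (c / 2) ≤ (ε ^ 2 / u σ) * (v σ - v s) :=
      mul_le_mul_of_nonneg_left (by linarith) (by positivity)
    linarith
  have hd : 0 < 2 * C + 1 / δ := by positivity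
  rw [le_div_iff₀ (by positivity)] at hη2
  rw [div_mul_eq_mul_div, div_le_iff₀ huσ] at f1
  have : 0 < ε ^ 2 * c := by positivity
  linarith

lemma Sol.lip {x y K : ℝ} {u v f : ℝ → ℝ} (S : Sol x y u v f) (hv : ∀ t ∈ Icc x y, |v t| ≤ K)
    {s t : ℝ} (hs : s ∈ Icc x y) (ht : t ∈ Icc x y) : |u t - u s| ≤ K * |t - s| := by
  have := (convex_Icc x y).norm_image_sub_le_of_norm_hasDerivWithin_le
    (f := u) (f' := v) (C := K) (fun r hr => (S.hd r hr).hasDerivWithinAt) (fun r hr => hv r hr) hs ht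
  simpa [Real.norm_eq_abs] using this

lemma lim1 {x y R K : ℝ} (hxy : x ≤ y) {u v f : ℕ → ℝ → ℝ} (S : ∀ n, Sol x y (u n) (v n) (f n))
    (hu : ∀ n, ∀ t ∈ Icc x y, |u n t| ≤ R) (hv : ∀ n, ∀ t ∈ Icc x y, |v n t| ≤ K) :
    ∃ φ : ℕ → ℕ, StrictMono φ ∧ ∃ U : ℝ → ℝ, ∃ A : ℝ,
      (∀ t ∈ Icc x y, Tendsto (fun n => u (φ n) t) atTop (𝓝 (U t))) ∧
      Tendsto (fun n => v (φ n) x) atTop (𝓝 A) := by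
  have mx : x ∈ Icc x y := ⟨le_rfl, hxy⟩
  let F : ℕ → BoundedContinuousFunction (Icc x y) ℝ := fun n =>
    BoundedContinuousFunction.mkOfCompact ⟨fun t => u n t, continuousOn_iff_continuous_domRestrict.1 (S n).cu⟩
  have hF : ∀ n t, F n t = u n t := fun n t => rfl
  have cpt := BoundedContinuousFunction.arzela_ascoli (Icc (-R) R) isCompact_Icc (range F)
    (by
      rintro _ t ⟨n, rfl⟩
      exact abs_le.1 (hu n t t.2))
    (by
      refine Metric.equicontinuous_of_continuity_modulus (fun r => K * r) ?_ _ ?_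
      · have : Continuous fun r : ℝ => K * r := by fun_prop
        simpa using this.tendsto 0
      · rintro s t ⟨_, n, rfl⟩
        exact (by
          have := (S n).lip (hv n) t.2 s.2
          simpa [Real.dist_eq, Subtype.dist_eq, hF] using this))
  obtain ⟨U, -, φ, hφ, hU⟩ := cpt.tendsto_subseq (x := F) (fun n => subset_closure ⟨n, rfl⟩)
  obtain ⟨A, -, ψ, hψ, hA⟩ := (isCompact_Icc (a := -K) (b := K)).tendsto_subseq
    (x := fun n => v (φ n) x) (fun n => abs_le.1 (hv _ x mx))
  refine ⟨φ ∘ ψ, hφ.comp hψ, fun t => if h : t ∈ Icc x y then U ⟨t, h⟩ else 0, A, ?_, hA⟩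
  intro t ht
  have h1 : Tendsto (fun n => F (φ (ψ n))) atTop (𝓝 U) := hU.comp hψ.tendsto_atTop
  have h2 : Tendsto (fun n => F (φ (ψ n)) ⟨t, ht⟩) atTop (𝓝 (U ⟨t, ht⟩)) :=
    (tendsto_pi_nhds.1 ((BoundedContinuousFunction.continuous_coe.tendsto U).comp h1)) ⟨t, ht⟩
  simp only [dif_pos ht]
  exact h2

lemma lim2 {x y K A : ℝ} (hxy : x ≤ y) {u v f : ℕ → ℝ → ℝ} {U F Q : ℝ → ℝ}
    (S : ∀ n, Sol x y (u n) (v n) (f n))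
    (hv : ∀ n, ∀ t ∈ Icc x y, |v n t| ≤ K) (hU : ∀ t ∈ Icc x y, Tendsto (fun n => u n t) atTop (𝓝 (U t)))
    (hA : Tendsto (fun n => v n x) atTop (𝓝 A)) (hQ : IntervalIntegrable Q volume x y)
    (hfQ : ∀ n, ∀ t ∈ Icc x y, |f n t| ≤ Q t)
    (hF : ∀ t ∈ Icc x y, Tendsto (fun n => f n t) atTop (𝓝 (F t))) :
    ∃ us vs : ℝ → ℝ, Sol x y us vs F ∧ (∀ t ∈ Icc x y, us t = U t) ∧
      ∀ t ∈ Icc x y, Tendsto (fun n => v n t) atTop (𝓝 (vs t)) := by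
  have mx : x ∈ Icc x y := ⟨le_rfl, hxy⟩
  have FQ : ∀ t ∈ Icc x y, |F t| ≤ Q t := fun t ht =>
    le_of_tendsto ((hF t ht).abs) (Eventually.of_forall fun n => hfQ n t ht)
  have Fm : AEStronglyMeasurable F (volume.restrict (Ioc x y)) := by
    refine aestronglyMeasurable_of_tendsto_ae atTop (f := f) (fun n => ?_) ?_
    · exact ((intervalIntegrable_iff_integrableOn_Ioc_of_le hxy).1 (S n).int).aestronglyMeasurable
    · exact (ae_restrict_iff' measurableSet_Ioc).2 (Eventually.of_forall fun t ht => hF t ⟨ht.1.le, ht.2⟩)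
  have Fi : IntegrableOn F (Ioc x y) :=
    ((intervalIntegrable_iff_integrableOn_Ioc_of_le hxy).1 hQ).mono' Fm
      ((ae_restrict_iff' measurableSet_Ioc).2 (Eventually.of_forall fun t ht => FQ t ⟨ht.1.le, ht.2⟩))
  let F' := (Ioc x y).indicator F
  have F'i : Integrable F' := (integrable_indicator_iff measurableSet_Ioc).2 Fi
  have F'ii : ∀ s t, IntervalIntegrable F' volume s t := fun s t => F'i.intervalIntegrable
  let vs : ℝ → ℝ := fun t => A + ∫ r in x..t, F' r
  have vc : Continuous vs := continuous_const.add (intervalIntegral.continuous_primitive F'ii x)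
  let us : ℝ → ℝ := fun t => U x + ∫ r in x..t, vs r
  have S0 : Sol x y us vs F' := by
    refine ⟨fun t _ => ?_, F'ii _ _, fun s _ t _ => ?_⟩
    · have := (intervalIntegral.integral_hasDerivAt_right (vc.intervalIntegrable x t)
        vc.aestronglyMeasurable.stronglyMeasurableAtFilter vc.continuousAt)
      exact this.const_add (U x)
    · simp only [vs]
      rw [← intervalIntegral.integral_interval_sub_left (F'ii x t) (F'ii x s)]; ring
  have hvs : ∀ t ∈ Icc x y, Tendsto (fun n => v n t) atTop (𝓝 (vs t)) := by
    intro t ht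
    have e : ∀ n, v n t = v n x + ∫ r in x..t, f n r := fun n => by
      have := (S n).eq x mx t ht; linarith
    simp only [e]
    refine hA.add ?_
    refine intervalIntegral.tendsto_integral_filter_of_dominated_convergence Q ?_ ?_ (ii_sub hQ mx ht) ?_
    · exact Eventually.of_forall fun n => (intervalIntegrable_iff.1 (ii_sub (S n).int mx ht)).aestronglyMeasurable
    · refine Eventually.of_forall fun n => Eventually.of_forall fun r hr => ?_
      rw [uIoc_of_le ht.1] at hr
      exact hfQ n r ⟨hr.1.le, hr.2.trans ht.2⟩
    · refine Eventually.of_forall fun r hr => ?_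
      rw [uIoc_of_le ht.1] at hr
      have : F' r = F r := indicator_of_mem (show r ∈ Ioc x y from ⟨hr.1, hr.2.trans ht.2⟩) F
      rw [this]
      exact hF r ⟨hr.1.le, hr.2.trans ht.2⟩
  refine ⟨us, vs, S0.congr hxy (Eventually.of_forall fun t ht => indicator_of_mem ht F), ?_, hvs⟩
  intro t ht
  have h1 : Tendsto (fun n => u n t) atTop (𝓝 (us t)) := by
    have e : ∀ n, u n t = u n x + ∫ r in x..t, v n r := fun n => by
      have := (S n).ftc hxy mx ht; linarith
    simp only [e]
    refine (hU x mx).add ?_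
    refine intervalIntegral.tendsto_integral_filter_of_dominated_convergence (fun _ => K) ?_ ?_
      intervalIntegrable_const ?_
    · exact Eventually.of_forall fun n => (intervalIntegrable_iff.1 (ii_sub ((S n).iv hxy) mx ht)).aestronglyMeasurable
    · refine Eventually.of_forall fun n => Eventually.of_forall fun r hr => ?_
      rw [uIoc_of_le ht.1] at hr
      exact hv n r ⟨hr.1.le, hr.2.trans ht.2⟩
    · refine Eventually.of_forall fun r hr => ?_
      rw [uIoc_of_le ht.1] at hr
      exact hvs r ⟨hr.1.le, hr.2.trans ht.2⟩
  exact tendsto_nhds_unique h1 (hU t ht)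

structure Side (σ L R μ : ℝ) (n g g' u v w z : ℝ → ℝ) : Prop where
  su : Sol (σ - L) σ u v (fun t => μ * n t * g (u t))
  sw : Sol (σ - L) σ w z (fun t => μ * n t * g' (u t) * w t)
  u0 : ∀ t ∈ Icc (σ - L) σ, 0 ≤ u t
  uR : ∀ t ∈ Icc (σ - L) σ, u t ≤ R
  w1 : ∀ t ∈ Icc (σ - L) σ, |w t| ≤ 1
  pos : 0 < u σ

lemma side_lim {σ L R C : ℝ} {n g g' : ℝ → ℝ} (N : NegL σ L n) (G : GG g g') (hC : 0 < C)
    (hR : 0 < R) {μ : ℕ → ℝ} (hμ : Tendsto μ atTop atTop) {u v w z : ℕ → ℝ → ℝ}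
    (H : ∀ k, Side σ L R (μ k) n g g' (u k) (v k) (w k) (z k))
    (hv : ∀ k, |v k σ| ≤ C) (hz : ∀ k, |z k σ| ≤ C) :
    Tendsto (fun k => u k σ) atTop (𝓝 0) ∧
      ∀ c > 0, (∀ᶠ k in atTop, c ≤ v k σ) → Tendsto (fun k => w k σ) atTop (𝓝 0) := by
  have key : Tendsto (fun k => u k σ) atTop (𝓝 0) := by
    rw [Metric.tendsto_atTop']
    intro ε hε
    obtain ⟨μ0, h0, h1⟩ := U_left (ε := ε / 2) N G hC hR (by positivity)
    obtain ⟨K, hK⟩ := eventually_atTop.1 (hμ.eventually_gt_atTop μ0)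
    refine ⟨K, fun k hk => ?_⟩
    have := h1 (μ k) (hK k hk.le) (u k) (v k) (H k).su (H k).u0 (H k).uR ((le_abs_self _).trans (hv k))
    rw [Real.dist_eq, sub_zero, abs_of_pos (H k).pos]; linarith
  refine ⟨key, fun c hc hcv => ?_⟩
  rw [Metric.tendsto_nhds]
  intro ε hε
  obtain ⟨η, h0, h1⟩ := W_left (ε := ε / 2) N G hC hc (by positivity)
  filter_upwards [hcv, hμ.eventually_gt_atTop 0, key.eventually_lt_const h0] with k k1 k2 k3
  have := h1 (μ k) k2 (u k) (v k) (w k) (z k) (H k).su (H k).u0 k1 (H k).pos k3.le (H k).sw (H k).w1 (hz k)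
  rw [Real.dist_eq, sub_zero]; linarith

structure Loc (σ τ L L' R μ : ℝ) (P n n' g g' u v w z : ℝ → ℝ) : Prop where
  su : Sol σ τ u v (fun t => -(P t * g (u t)))
  sw : Sol σ τ w z (fun t => -(P t * g' (u t) * w t))
  u0 : ∀ t ∈ Icc σ τ, 0 ≤ u t
  uR : ∀ t ∈ Icc σ τ, u t ≤ R
  w1 : ∀ t ∈ Icc σ τ, |w t| ≤ 1
  left : Side σ L R μ n g g' u v w z
  right : Side τ L' R μ (fun t => n' (2 * τ - t)) g g' (fun t => u (2 * τ - t)) (fun t => - v (2 * τ - t))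
    (fun t => w (2 * τ - t)) (fun t => - z (2 * τ - t))

section
variable {σ τ c L L' R : ℝ} {P n n' g g' : ℝ → ℝ}

lemma gbd (G : GG g g') (R : ℝ) : ∃ M > 0, ∀ s ∈ Icc 0 R, g' s ≤ M := by
  obtain ⟨M, hM⟩ := (isCompact_Icc (a := (0 : ℝ)) (b := R)).bddAbove_image G.cont.continuousOn
  exact ⟨max M 1, by positivity, fun s hs => le_max_of_le_left (hM ⟨s, hs, rfl⟩)⟩

lemma loc_f1 (W : Wt σ τ c P) (G : GG g g') {u : ℝ → ℝ}
    (u0 : ∀ t ∈ Icc σ τ, 0 ≤ u t) (uR : ∀ t ∈ Icc σ τ, u t ≤ R) {t : ℝ} (ht : t ∈ Icc σ τ) :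
    |-(P t * g (u t))| ≤ g R * P t := by
  rw [abs_neg, abs_of_nonneg (mul_nonneg (W.nonneg t ht) (G.nonneg (u0 t ht))), mul_comm]
  exact mul_le_mul_of_nonneg_right (G.mono (uR t ht)) (W.nonneg t ht)

lemma loc_f2 (W : Wt σ τ c P) (G : GG g g') {M : ℝ} (hM : ∀ s ∈ Icc 0 R, g' s ≤ M) {u w : ℝ → ℝ}
    (u0 : ∀ t ∈ Icc σ τ, 0 ≤ u t) (uR : ∀ t ∈ Icc σ τ, u t ≤ R) (w1 : ∀ t ∈ Icc σ τ, |w t| ≤ 1)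
    {t : ℝ} (ht : t ∈ Icc σ τ) :
    |-(P t * g' (u t) * w t)| ≤ M * P t := by
  have a1 := W.nonneg t ht
  have a2 := G.nonneg' (u t)
  have a3 := hM _ ⟨u0 t ht, uR t ht⟩
  rw [abs_neg, abs_mul, abs_of_nonneg (mul_nonneg a1 a2)]
  calc P t * g' (u t) * |w t| ≤ P t * g' (u t) * 1 := mul_le_mul_of_nonneg_left (w1 t ht) (mul_nonneg a1 a2)
    _ ≤ M * P t := by nlinarith

lemma loc_bd (W : Wt σ τ c P) (G : GG g g') (hR : 0 < R) : ∃ C > 0, ∀ μ u v w z,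
    Loc σ τ L L' R μ P n n' g g' u v w z → ∀ t ∈ Icc σ τ, |v t| ≤ C ∧ |z t| ≤ C := by
  obtain ⟨M, hM0, hM⟩ := gbd G R
  have hl := W.lt
  refine ⟨max (max (2 * R / (τ - σ) + ∫ r in σ..τ, g R * P r) (2 * 1 / (τ - σ) + ∫ r in σ..τ, M * P r)) 1,
    by positivity, fun μ u v w z H t ht => ⟨?_, ?_⟩⟩
  · have := slope_bd hl H.su (R := R) (fun t ht => by rw [abs_of_nonneg (H.u0 t ht)]; exact H.uR t ht)
      (W.int.const_mul (g R)) (fun t ht => loc_f1 W G H.u0 H.uR ht) t ht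
    exact this.trans ((le_max_left _ _).trans (le_max_left _ _))
  · have := slope_bd hl H.sw (R := 1) H.w1
      (W.int.const_mul M) (fun t ht => loc_f2 W G hM H.u0 H.uR H.w1 ht) t ht
    exact this.trans ((le_max_right _ _).trans (le_max_left _ _))

lemma key_seq (W : Wt σ τ c P) (G : GG g g') (N : NegL σ L n) (N' : NegL τ L' (fun t => n' (2 * τ - t)))
    (hR : 0 < R) {μ : ℕ → ℝ} (hμ : Tendsto μ atTop atTop) {u v w z : ℕ → ℝ → ℝ}
    (H : ∀ k, Loc σ τ L L' R (μ k) P n n' g g' (u k) (v k) (w k) (z k)) {U X : ℝ → ℝ} {A B : ℝ}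
    (hU : ∀ t ∈ Icc σ τ, Tendsto (fun k => u k t) atTop (𝓝 (U t)))
    (hX : ∀ t ∈ Icc σ τ, Tendsto (fun k => w k t) atTop (𝓝 (X t)))
    (hA : Tendsto (fun k => v k σ) atTop (𝓝 A)) (hB : Tendsto (fun k => z k σ) atTop (𝓝 B)) :
    Tendsto (fun k => ∫ t in σ..τ, P t * g' (u k t) * w k t * w k t) atTop (𝓝 0) := by
  have hl := W.lt
  have mσ : σ ∈ Icc σ τ := ⟨le_rfl, hl.le⟩
  have mτ : τ ∈ Icc σ τ := ⟨hl.le, le_rfl⟩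
  obtain ⟨M, hM0, hM⟩ := gbd G R
  obtain ⟨C, hC, hb⟩ := loc_bd (L := L) (L' := L') (n := n) (n' := n') W G hR
  have hb' := fun k => hb _ _ _ _ _ (H k)
  obtain ⟨us, vs, Ss, eu, cv⟩ := lim2 (U := U) (F := fun t => -(P t * g (U t))) hl.le (fun k => (H k).su)
    (fun k t ht => (hb' k t ht).1) hU hA
    (W.int.const_mul (g R)) (fun k t ht => loc_f1 W G (H k).u0 (H k).uR ht)
    (fun t ht => (((G.cg.tendsto _).comp (hU t ht)).const_mul (P t)).neg)
  obtain ⟨ws, zs, Sw, ew, cz⟩ := lim2 (U := X) (F := fun t => -(P t * g' (U t) * X t)) hl.le (fun k => (H k).sw)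
    (fun k t ht => (hb' k t ht).2) hX hB
    (W.int.const_mul M) (fun k t ht => loc_f2 W G hM (H k).u0 (H k).uR (H k).w1 ht)
    (fun t ht => ((((G.cont.tendsto _).comp (hU t ht)).const_mul (P t)).mul (hX t ht)).neg)
  have Ss' : Sol σ τ us vs (fun t => -(P t * g (us t))) := Ss.congr hl.le (Eventually.of_forall fun t ht => by
    simp only [eu t ⟨ht.1.le, ht.2⟩])
  have Sw' : Sol σ τ ws zs (fun t => -(P t * g' (us t) * ws t)) :=
    Sw.congr hl.le (Eventually.of_forall fun t ht => by
      simp only [eu t ⟨ht.1.le, ht.2⟩, ew t ⟨ht.1.le, ht.2⟩])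
  have u0 : ∀ t ∈ Icc σ τ, 0 ≤ us t := fun t ht => by
    rw [eu t ht]
    exact ge_of_tendsto (hU t ht) (Eventually.of_forall fun k => (H k).u0 t ht)
  have e2 : 2 * τ - τ = τ := by ring
  obtain ⟨l1, l2⟩ := side_lim N G hC hR hμ (fun k => (H k).left)
    (fun k => (hb' k σ mσ).1) (fun k => (hb' k σ mσ).2)
  obtain ⟨r1, r2⟩ := side_lim N' G hC hR hμ (fun k => (H k).right)
    (fun k => by simp only [e2, abs_neg]; exact (hb' k τ mτ).1)
    (fun k => by simp only [e2, abs_neg]; exact (hb' k τ mτ).2)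
  simp only [e2] at r1 r2
  have uσ : us σ = 0 := by rw [eu σ mσ]; exact tendsto_nhds_unique (hU σ mσ) l1
  have uτ : us τ = 0 := by rw [eu τ mτ]; exact tendsto_nhds_unique (hU τ mτ) r1
  have anti := Ss'.v_anti (Eventually.of_forall fun t ht => by
    have := mul_nonneg (W.nonneg t ⟨ht.1.le, ht.2⟩) (G.nonneg (u0 t ⟨ht.1.le, ht.2⟩))
    linarith)
  have fin : ∀ t ∈ Icc σ τ, g' (U t) * X t = 0 := by
    by_cases hz : ∃ t0 ∈ Ioo σ τ, us t0 = 0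
    · obtain ⟨t0, ht0, h0⟩ := hz
      intro t ht
      suffices us t = 0 by rw [← eu t ht, this, G.dzero, zero_mul]
      have hn := u0 t ht
      rcases le_total t t0 with h | h
      · have := Ss'.chord anti ht mτ h ht0.2.le
        rw [h0, uτ] at this
        nlinarith [ht0.2]
      · have := Ss'.chord anti mσ ht ht0.1.le h
        rw [h0, uσ] at this
        nlinarith [ht0.1]
    · push Not at hz
      have up : ∀ t ∈ Ioo σ τ, 0 < us t := fun t ht =>
        lt_of_le_of_ne (u0 t ⟨ht.1.le, ht.2.le⟩) (hz t ht).symm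
      have mm : (σ + τ) / 2 ∈ Ioo σ τ := ⟨by linarith, by linarith⟩
      have mm' := Ioo_subset_Icc_self mm
      have um := up _ mm
      have v1 : 0 < vs σ := by
        have := Ss'.tangent' anti mσ mm'
        by_contra hh
        push Not at hh
        nlinarith [mm.1]
      have v2 : vs τ < 0 := by
        have := Ss'.tangent' anti mτ mm'
        by_contra hh
        push Not at hh
        nlinarith [mm.2]
      have w1 : ws σ = 0 := by
        rw [ew σ mσ]
        refine tendsto_nhds_unique (hX σ mσ) (l2 (vs σ / 2) (by positivity) ?_)
        exact (cv σ mσ).eventually_const_le (by linarith)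
      have w2 : ws τ = 0 := by
        rw [ew τ mτ]
        refine tendsto_nhds_unique (hX τ mτ) (r2 (-vs τ / 2) (by linarith) ?_)
        exact (cv τ mτ).neg.eventually_const_le (by linarith)
      have := L_thm W G Ss' up uσ uτ Sw' w1 w2
      intro t ht
      rw [← ew t ht, this t ht, mul_zero]
  have lim : Tendsto (fun k => ∫ t in σ..τ, P t * g' (u k t) * w k t * w k t) atTop
      (𝓝 (∫ t in σ..τ, (0:ℝ))) := by
    refine intervalIntegral.tendsto_integral_filter_of_dominated_convergence (fun t => M * P t) ?_ ?_
      (W.int.const_mul M) ?_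
    · refine Eventually.of_forall fun k => ?_
      have i1 := ((H k).sw.int.neg).mul_continuousOn (g := w k) (by
        rw [uIcc_of_le hl.le]; exact (H k).sw.cu)
      have i2 := (intervalIntegrable_iff.1 i1).aestronglyMeasurable
      refine i2.congr (Eventually.of_forall fun t => ?_)
      simp
    · refine Eventually.of_forall fun k => Eventually.of_forall fun t ht => ?_
      rw [uIoc_of_le hl.le] at ht
      have mt : t ∈ Icc σ τ := ⟨ht.1.le, ht.2⟩
      have := loc_f2 W G hM (H k).u0 (H k).uR (H k).w1 mt
      rw [abs_neg] at this
      rw [Real.norm_eq_abs, abs_mul]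
      have h1 := (H k).w1 t mt
      nlinarith [abs_nonneg (w k t), abs_nonneg (P t * g' (u k t) * w k t)]
    · refine Eventually.of_forall fun t ht => ?_
      rw [uIoc_of_le hl.le] at ht
      have mt : t ∈ Icc σ τ := ⟨ht.1.le, ht.2⟩
      have := (((((G.cont.tendsto _).comp (hU t mt)).const_mul (P t)).mul (hX t mt)).mul (hX t mt))
      rw [mul_assoc (P t), fin t mt] at this
      simpa using this
  simpa using lim

lemma key_local (W : Wt σ τ c P) (G : GG g g') (N : NegL σ L n) (N' : NegL τ L' (fun t => n' (2 * τ - t)))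
    (hR : 0 < R) {ε : ℝ} (hε : 0 < ε) : ∃ μ0 > 0, ∀ μ > μ0, ∀ u v w z : ℝ → ℝ,
      Loc σ τ L L' R μ P n n' g g' u v w z → ∫ t in σ..τ, P t * g' (u t) * w t * w t ≤ ε := by
  by_contra hcon
  push Not at hcon
  choose μ hμ u v w z H hbad using fun k : ℕ => hcon (k + 1) (by positivity)
  have hl := W.lt
  obtain ⟨C, hC, hb⟩ := loc_bd (L := L) (L' := L') (n := n) (n' := n') W G hR
  have hb' := fun k => hb _ _ _ _ _ (H k)
  have hμt : Tendsto μ atTop atTop :=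
    tendsto_atTop_mono (fun k => by have := hμ k; linarith) tendsto_natCast_atTop_atTop
  obtain ⟨φ, hφ, U, A, hU, hA⟩ := lim1 (R := R) (K := C) hl.le (fun k => (H k).su)
    (fun k t ht => by rw [abs_of_nonneg ((H k).u0 t ht)]; exact (H k).uR t ht) (fun k t ht => (hb' k t ht).1)
  obtain ⟨ψ, hψ, X, B, hX, hB⟩ := lim1 (R := 1) (K := C) hl.le (fun k => (H (φ k)).sw)
    (fun k => (H (φ k)).w1) (fun k t ht => (hb' (φ k) t ht).2)
  have := key_seq W G N N' hR (μ := fun k => μ (φ (ψ k))) (hμt.comp ((hφ.comp hψ).tendsto_atTop))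
    (fun k => H (φ (ψ k))) (fun t ht => (hU t ht).comp hψ.tendsto_atTop) hX
    (hA.comp hψ.tendsto_atTop) hB
  obtain ⟨k, hk⟩ := (this.eventually_lt_const hε).exists
  linarith [hbad (φ (ψ k))]
end

lemma sup_one {a b E : ℝ} (hab : a < b) {w z f : ℝ → ℝ} (S : Sol a b w z f) (h0 : w a = 0)
    (hE : ∫ t in a..b, z t * z t ≤ E) (hE' : E * (b - a) < 1) : ∀ t ∈ Icc a b, |w t| < 1 := by
  intro t ht
  set κ := (b - a) / 2 with hκ
  have hκ0 : 0 < κ := by simp only [hκ]; linarith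
  have ma : a ∈ Icc a b := ⟨le_rfl, hab.le⟩
  have mb : b ∈ Icc a b := ⟨hab.le, le_rfl⟩
  have cz : ContinuousOn z (uIcc a b) := by rw [uIcc_of_le hab.le]; exact S.cv hab.le
  have iz := S.iv hab.le
  have izz : IntervalIntegrable (fun t => κ * (z t * z t) + 1 / (4 * κ)) volume a b :=
    (((cz.mul cz).intervalIntegrable).const_mul κ).add intervalIntegrable_const
  have p1 : ∀ r, |z r| ≤ κ * (z r * z r) + 1 / (4 * κ) := by
    intro r
    have e : κ * (z r * z r) + 1 / (4 * κ) - |z r| = κ * (|z r| - 1 / (2 * κ)) ^ 2 := by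
      rw [← abs_mul_abs_self]; field_simp; ring
    have : 0 ≤ κ * (|z r| - 1 / (2 * κ)) ^ 2 := by positivity
    linarith
  have iz2 : IntervalIntegrable (fun t => z t * z t) volume a b := (cz.mul cz).intervalIntegrable
  have T : ∫ r in a..b, (κ * (z r * z r) + 1 / (4 * κ)) < 1 := by
    rw [intervalIntegral.integral_add (iz2.const_mul κ) intervalIntegrable_const,
      intervalIntegral.integral_const_mul, intervalIntegral.integral_const]
    have h1 : κ * ∫ t in a..b, z t * z t ≤ κ * E := mul_le_mul_of_nonneg_left hE hκ0.le
    have h2 : (b - a) • (1 / (4 * κ)) = 1 / 2 := by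
      have : b - a ≠ 0 := by linarith
      simp only [hκ, smul_eq_mul]; field_simp; norm_num
    rw [h2]
    have h3 : κ * E = E * (b - a) / 2 := by simp only [hκ]; ring
    linarith
  have T2 : ∫ r in a..t, (κ * (z r * z r) + 1 / (4 * κ)) ≤ ∫ r in a..b, (κ * (z r * z r) + 1 / (4 * κ)) := by
    have := int_nonneg (f := fun r => κ * (z r * z r) + 1 / (4 * κ)) ht.2
      (Eventually.of_forall fun r _ => (abs_nonneg _).trans (p1 r))
    rw [← intervalIntegral.integral_add_adjacent_intervals (ii_sub izz ma ht) (ii_sub izz ht mb)]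
    linarith
  have e := S.ftc hab.le ma ht
  rw [h0, sub_zero] at e
  have b1 : |∫ r in a..t, z r| ≤ ∫ r in a..t, |z r| := intervalIntegral.abs_integral_le_integral_abs ht.1
  have b2 : ∫ r in a..t, |z r| ≤ ∫ r in a..t, (κ * (z r * z r) + 1 / (4 * κ)) :=
    int_mono ht.1 (ii_sub iz ma ht).abs (ii_sub izz ma ht) (Eventually.of_forall fun r _ => p1 r)
  rw [e]; linarith

theorem core {a b : ℝ} (hab : a < b) {g g' : ℝ → ℝ} (G : GG g g') {p q : ℝ → ℝ} (p0 : ∀ t, 0 ≤ p t)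
    (q0 : ∀ t, 0 ≤ q t) (ip : IntervalIntegrable p volume a b)
    (m : ℕ) (σ τ : ℕ → ℝ) (hτ0 : τ 0 = a) (hσm : σ (m + 1) = b)
    (hlt : ∀ i ≤ m, τ i < σ (i + 1)) (ha : ∀ i ≤ m, a ≤ τ i) (hb : ∀ i ≤ m, σ (i + 1) ≤ b)
    (Wts : ∀ j, j < m → ∃ c P, Wt (σ (j + 1)) (τ (j + 1)) c P ∧
      ∀ᵐ t, t ∈ Ioc (σ (j + 1)) (τ (j + 1)) → p t = P t ∧ q t = 0)
    (hneg : ∀ i ≤ m, ∀ᵐ t, t ∈ Ioc (τ i) (σ (i + 1)) → p t = 0)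
    (NL : ∀ j, j < m → NegL (σ (j + 1)) (σ (j + 1) - τ j) q)
    (NR : ∀ j, j < m → NegL (τ (j + 1)) (σ (j + 2) - τ (j + 1)) (fun t => q (2 * τ (j + 1) - t))) :
    ∃ μss > 0, ∀ μ > μss, ∀ u v : ℝ → ℝ, Sol a b u v (fun t => -((p t - μ * q t) * g (u t))) →
      u a = 0 → u b = 0 → (∀ t ∈ Ioo a b, 0 < u t) → ∀ w z : ℝ → ℝ,
      Sol a b w z (fun t => -((p t - μ * q t) * g' (u t) * w t)) → w a = 0 → w b = 0 →
      ∀ t ∈ Icc a b, w t = 0 := by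
  choose c P W hP using Wts
  have ap : ∀ j, ∃ R > 0, ∀ hj : j < m, ∀ u v, Sol (σ (j + 1)) (τ (j + 1)) u v (fun t => -(P j hj t * g (u t))) →
      (∀ t ∈ Icc (σ (j + 1)) (τ (j + 1)), 0 ≤ u t) → ∀ t ∈ Icc (σ (j + 1)) (τ (j + 1)), u t ≤ R := by
    intro j
    by_cases hj : j < m
    · obtain ⟨R, hR, h⟩ := apriori (W j hj) G
      exact ⟨R, hR, fun _ => h⟩
    · exact ⟨1, one_pos, fun h => absurd h hj⟩
  choose Rs Rs0 hRs using ap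
  set R := 1 + ∑ j ∈ Finset.range m, Rs j with hRdef
  have hRpos : 0 < R := add_pos_of_pos_of_nonneg one_pos (Finset.sum_nonneg fun j _ => (Rs0 j).le)
  have hRj : ∀ j, j < m → Rs j ≤ R := fun j hj => by
    have := Finset.single_le_sum (f := Rs) (fun j _ => (Rs0 j).le) (Finset.mem_range.2 hj)
    linarith
  set ε := 1 / (2 * (m + 1) * (b - a)) with hεdef
  have hba : 0 < b - a := sub_pos.2 hab
  have hε : 0 < ε := by positivity
  have kl : ∀ j, ∃ μ0 > 0, ∀ hj : j < m, ∀ μ > μ0, ∀ u v w z : ℝ → ℝ,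
      Loc (σ (j + 1)) (τ (j + 1)) (σ (j + 1) - τ j) (σ (j + 2) - τ (j + 1)) R μ (P j hj) q q g g' u v w z →
      ∫ t in (σ (j + 1))..(τ (j + 1)), P j hj t * g' (u t) * w t * w t ≤ ε := by
    intro j
    by_cases hj : j < m
    · obtain ⟨μ0, h0, h⟩ := key_local (W j hj) G (NL j hj) (NR j hj) hRpos hε
      exact ⟨μ0, h0, fun _ => h⟩
    · exact ⟨1, one_pos, fun h => absurd h hj⟩
  choose μs μs0 hμs using kl
  refine ⟨1 + ∑ j ∈ Finset.range m, μs j,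
    add_pos_of_pos_of_nonneg one_pos (Finset.sum_nonneg fun j _ => (μs0 j).le), ?_⟩
  intro μ hμ u v Su ua ub upos
  have hμ0 : 0 < μ :=
    (add_pos_of_pos_of_nonneg one_pos (Finset.sum_nonneg fun j _ => (μs0 j).le)).trans hμ
  have hμj : ∀ j, j < m → μs j < μ := fun j hj => by
    have := Finset.single_le_sum (f := μs) (fun j _ => (μs0 j).le) (Finset.mem_range.2 hj)
    linarith
  have u0 : ∀ t ∈ Icc a b, 0 ≤ u t := fun t ht => by
    rcases ht.1.eq_or_lt with h | h
    · rw [← h, ua]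
    rcases ht.2.eq_or_lt with h' | h'
    · rw [h', ub]
    · exact (upos t ⟨h, h'⟩).le
  -- order facts
  have o1 : ∀ j, j < m → a < σ (j + 1) ∧ σ (j + 1) < τ (j + 1) ∧ τ (j + 1) < b := fun j hj =>
    ⟨(ha j hj.le).trans_lt (hlt j hj.le), (W j hj).lt, (hlt (j + 1) hj).trans_le (hb (j + 1) hj)⟩
  -- restriction
  have SuP : ∀ j (hj : j < m), Sol (σ (j + 1)) (τ (j + 1)) u v (fun t => -(P j hj t * g (u t))) := fun j hj => by
    obtain ⟨x1, x2, x3⟩ := o1 j hj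
    refine (Su.mono x1.le x2.le x3.le).congr x2.le ?_
    filter_upwards [hP j hj] with t ht htt
    obtain ⟨e1, e2⟩ := ht htt
    rw [e1, e2]; ring
  have SuN : ∀ i ≤ m, Sol (τ i) (σ (i + 1)) u v (fun t => μ * q t * g (u t)) := fun i hi => by
    refine (Su.mono (ha i hi) (hlt i hi).le (hb i hi)).congr (hlt i hi).le ?_
    filter_upwards [hneg i hi] with t ht htt
    rw [ht htt]; ring
  have uRP : ∀ j, j < m → ∀ t ∈ Icc (σ (j + 1)) (τ (j + 1)), u t ≤ R := fun j hj t ht => by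
    obtain ⟨x1, x2, x3⟩ := o1 j hj
    exact (hRs j hj u v (SuP j hj) (fun t ht => u0 t ⟨x1.le.trans ht.1, ht.2.trans x3.le⟩) t ht).trans (hRj j hj)
  have uτ : ∀ i ≤ m, u (τ i) ≤ R := fun i hi => by
    rcases i with _ | j
    · rw [hτ0, ua]; exact hRpos.le
    · exact uRP j hi _ ⟨(o1 j hi).2.1.le, le_rfl⟩
  have uσ : ∀ i ≤ m, u (σ (i + 1)) ≤ R := fun i hi => by
    rcases hi.eq_or_lt with h | h
    · rw [h, hσm, ub]; exact hRpos.le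
    · exact uRP i h _ ⟨le_rfl, (o1 i h).2.1.le⟩
  have uRN : ∀ i ≤ m, ∀ t ∈ Icc (τ i) (σ (i + 1)), u t ≤ R := fun i hi t ht => by
    have S := SuN i hi
    have mono := S.v_mono (Eventually.of_forall fun t ht =>
      mul_nonneg (mul_nonneg hμ0.le (q0 t)) (G.nonneg (u0 t ⟨(ha i hi).trans ht.1.le, ht.2.trans (hb i hi)⟩)))
    have := S.chord' mono ⟨le_rfl, (hlt i hi).le⟩ ⟨(hlt i hi).le, le_rfl⟩ ht.1 ht.2
    have h1 := uτ i hi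
    have h2 := uσ i hi
    have h3 := hlt i hi
    have h4 := mul_le_mul_of_nonneg_right h1 (sub_nonneg.2 ht.2)
    have h5 := mul_le_mul_of_nonneg_right h2 (sub_nonneg.2 ht.1)
    nlinarith
  -- main claim
  have claim : ∀ w z : ℝ → ℝ,
      Sol a b w z (fun t => -((p t - μ * q t) * g' (u t) * w t)) → w a = 0 → w b = 0 →
      (∀ t ∈ Icc a b, |w t| ≤ 1) → ∀ t ∈ Icc a b, |w t| < 1 := by
    intro w z Sw wa wb w1
    have SwP : ∀ j (hj : j < m), Sol (σ (j + 1)) (τ (j + 1)) w z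
        (fun t => -(P j hj t * g' (u t) * w t)) := fun j hj => by
      obtain ⟨x1, x2, x3⟩ := o1 j hj
      refine (Sw.mono x1.le x2.le x3.le).congr x2.le ?_
      filter_upwards [hP j hj] with t ht htt
      obtain ⟨e1, e2⟩ := ht htt
      rw [e1, e2]; ring
    have SwN : ∀ i ≤ m, Sol (τ i) (σ (i + 1)) w z (fun t => μ * q t * g' (u t) * w t) := fun i hi => by
      refine (Sw.mono (ha i hi) (hlt i hi).le (hb i hi)).congr (hlt i hi).le ?_
      filter_upwards [hneg i hi] with t ht htt
      rw [ht htt]; ring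
    have loc : ∀ j (hj : j < m), Loc (σ (j + 1)) (τ (j + 1)) (σ (j + 1) - τ j) (σ (j + 2) - τ (j + 1)) R μ
        (P j hj) q q g g' u v w z := fun j hj => by
      obtain ⟨x1, x2, x3⟩ := o1 j hj
      refine ⟨SuP j hj, SwP j hj, fun t ht => u0 t ⟨x1.le.trans ht.1, ht.2.trans x3.le⟩, uRP j hj,
        fun t ht => w1 t ⟨x1.le.trans ht.1, ht.2.trans x3.le⟩, ?_, ?_⟩
      · have hs : ∀ t ∈ Icc (τ j) (σ (j + 1)), t ∈ Icc a b := fun t ht =>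
          ⟨(ha j hj.le).trans ht.1, ht.2.trans (hb j hj.le)⟩
        constructor
        · rw [sub_sub_cancel]; exact SuN j hj.le
        · rw [sub_sub_cancel]; exact SwN j hj.le
        · rw [sub_sub_cancel]; exact fun t ht => u0 t (hs t ht)
        · rw [sub_sub_cancel]; exact uRN j hj.le
        · rw [sub_sub_cancel]; exact fun t ht => w1 t (hs t ht)
        · exact upos _ ⟨x1, x2.trans x3⟩
      · have e1 : 2 * τ (j + 1) - σ (j + 2) = τ (j + 1) - (σ (j + 2) - τ (j + 1)) := by ring
        have e2 : 2 * τ (j + 1) - τ (j + 1) = τ (j + 1) := by ring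
        have hs' : ∀ t ∈ Icc (τ (j + 1) - (σ (j + 2) - τ (j + 1))) (τ (j + 1)),
            2 * τ (j + 1) - t ∈ Icc (τ (j + 1)) (σ (j + 2)) := fun t ht =>
          ⟨by linarith [ht.2], by linarith [ht.1]⟩
        have hs : ∀ t ∈ Icc (τ (j + 1)) (σ (j + 2)), t ∈ Icc a b := fun t ht =>
          ⟨(ha (j + 1) hj).trans ht.1, ht.2.trans (hb (j + 1) hj)⟩
        constructor
        · have := (SuN (j + 1) hj).reflect (2 * τ (j + 1))
          rw [e1, e2] at this; exact this
        · have := (SwN (j + 1) hj).reflect (2 * τ (j + 1))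
          rw [e1, e2] at this; exact this
        · exact fun t ht => u0 _ (hs _ (hs' t ht))
        · exact fun t ht => uRN (j + 1) hj _ (hs' t ht)
        · exact fun t ht => w1 _ (hs _ (hs' t ht))
        · simp only [e2]; exact upos _ ⟨x1.trans x2, x3⟩
    have cu : ContinuousOn u (uIcc a b) := by rw [uIcc_of_le hab.le]; exact Su.cu
    have cw : ContinuousOn w (uIcc a b) := by rw [uIcc_of_le hab.le]; exact Sw.cu
    have cz : ContinuousOn z (uIcc a b) := by rw [uIcc_of_le hab.le]; exact Sw.cv hab.le
    set e : ℝ → ℝ := fun t => p t * g' (u t) * w t * w t with he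
    have ie : IntervalIntegrable e volume a b :=
      ((ip.mul_continuousOn (G.cont.comp_continuousOn cu)).mul_continuousOn cw).mul_continuousOn cw
    have ma : a ∈ Icc a b := ⟨le_rfl, hab.le⟩
    have mτ : ∀ i ≤ m, τ i ∈ Icc a b := fun i hi => ⟨ha i hi, (hlt i hi).le.trans (hb i hi)⟩
    have mσ : ∀ i ≤ m, σ (i + 1) ∈ Icc a b := fun i hi => ⟨(ha i hi).trans (hlt i hi).le, hb i hi⟩
    have zN : ∀ i ≤ m, ∫ t in (τ i)..(σ (i + 1)), e t = 0 := fun i hi => by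
      rw [int_congr (x := τ i) (y := σ (i + 1)) (f' := fun _ => (0:ℝ)) ⟨le_rfl, (hlt i hi).le⟩ ⟨(hlt i hi).le, le_rfl⟩]
      · simp
      · filter_upwards [hneg i hi] with t ht htt
        simp only [he, ht htt]; ring
    have zP : ∀ j, j < m → ∫ t in (σ (j + 1))..(τ (j + 1)), e t ≤ ε := fun j hj => by
      obtain ⟨x1, x2, x3⟩ := o1 j hj
      have := hμs j hj μ (hμj j hj) u v w z (loc j hj)
      rwa [int_congr (x := σ (j + 1)) (y := τ (j + 1)) (f' := e) ⟨le_rfl, x2.le⟩ ⟨x2.le, le_rfl⟩] at this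
      filter_upwards [hP j hj] with t ht htt
      simp only [he, (ht htt).1]
    have ind : ∀ i ≤ m, ∫ t in a..(τ i), e t ≤ i * ε := by
      intro i
      induction i with
      | zero => intro _; rw [hτ0]; simp
      | succ j ih =>
        intro hj
        have h1 := ih (by omega)
        have h2 := zN j (by omega)
        have h3 := zP j hj
        have a1 := mτ j (by omega)
        have a2 := mσ j (by omega)
        have a3 := mτ (j + 1) hj
        rw [← intervalIntegral.integral_add_adjacent_intervals (ii_sub ie ma a1) (ii_sub ie a1 a3),
          ← intervalIntegral.integral_add_adjacent_intervals (ii_sub ie a1 a2) (ii_sub ie a2 a3), h2]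
        push_cast
        linarith
    have tot : ∫ t in a..b, e t ≤ m * ε := by
      have h1 := ind m le_rfl
      have h2 := zN m le_rfl
      have a1 := mτ m le_rfl
      rw [hσm] at h2
      rw [← intervalIntegral.integral_add_adjacent_intervals (ii_sub ie ma a1) (ii_sub ie a1 ⟨hab.le, le_rfl⟩), h2]
      linarith
    have en : ∫ t in a..b, z t * z t ≤ m * ε := by
      have iz2 : IntervalIntegrable (fun t => z t * z t) volume a b := (cz.mul cz).intervalIntegrable
      have h1 := Sw.inc_uv hab.le Sw
      rw [wa, wb, intervalIntegral.integral_add iz2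
        (Sw.int.continuousOn_mul cw)] at h1
      have h2 : ∫ t in a..b, -(w t * -((p t - μ * q t) * g' (u t) * w t)) ≤ ∫ t in a..b, e t := by
        refine int_mono hab.le (Sw.int.continuousOn_mul cw).neg ie (Eventually.of_forall fun t _ => ?_)
        have := mul_nonneg (mul_nonneg (mul_nonneg hμ0.le (q0 t)) (G.nonneg' (u t))) (mul_self_nonneg (w t))
        simp only [he]; nlinarith
      rw [intervalIntegral.integral_neg] at h2
      linarith
    refine sup_one hab Sw wa en ?_
    simp only [hεdef]
    rw [mul_one_div, div_mul_eq_mul_div, div_lt_one (by positivity)]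
    nlinarith [mul_nonneg (Nat.cast_nonneg (α := ℝ) m) hba.le]
  intro w z Sw wa wb
  obtain ⟨t0, ht0, hmax⟩ := isCompact_Icc.exists_isMaxOn (nonempty_Icc.2 hab.le) Sw.cu.abs
  by_cases hz : |w t0| = 0
  · intro t ht
    have : |w t| ≤ |w t0| := hmax ht
    rw [hz] at this
    exact abs_eq_zero.1 (le_antisymm this (abs_nonneg _))
  · exfalso
    have hM : 0 < |w t0| := lt_of_le_of_ne (abs_nonneg _) (Ne.symm hz)
    have S2 := (Sw.smul |w t0|⁻¹).congr hab.le
      (f' := fun t => -((p t - μ * q t) * g' (u t) * (|w t0|⁻¹ * w t)))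
      (Eventually.of_forall fun t _ => by ring)
    have := claim _ _ S2 (by simp [wa]) (by simp [wb]) (fun t ht => by
      have : |w t| ≤ |w t0| := hmax ht
      rw [abs_mul, abs_of_pos (inv_pos.2 hM), inv_mul_le_iff₀ hM]; linarith) t0 ht0
    rw [abs_mul, abs_of_pos (inv_pos.2 hM), inv_mul_cancel₀ hz] at this
    exact lt_irrefl _ this

lemma IsCaraSol.toSol {a b : ℝ} (hab : a ≤ b) {F : ℝ → ℝ → ℝ} {u v : ℝ → ℝ} (H : IsCaraSol a b F u v) :
    Sol a b u v (fun t => -(F t (u t))) := by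
  obtain ⟨h1, h2, h3⟩ := H
  have ma : a ∈ Icc a b := ⟨le_rfl, hab⟩
  refine ⟨h1, h2.neg, fun s hs t ht => ?_⟩
  rw [intervalIntegral.integral_neg, h3 s hs, h3 t ht,
    ← intervalIntegral.integral_interval_sub_left (ii_sub h2 ma ht) (ii_sub h2 ma hs)]
  ring

lemma GG.build {g : ℝ → ℝ} (hg_C1 : ContDiffOn ℝ 1 g (Set.Ici 0))
    (hg0 : g 0 = 0)
    (hg_pos : ∀ s > 0, 0 < g s)
    (hg_ext : ∀ s ≤ (0 : ℝ), g s = 0)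
    (hg_s : ∀ s > (0 : ℝ), g s / s < deriv g s)
    (hg_zero : deriv g 0 = 0 ∧
      Tendsto (fun s => g s / s) (nhdsWithin 0 (Set.Ioi 0)) (nhds 0))
    (hg_infty : Tendsto (fun s => g s / s) atTop atTop) : GG g (deriv g) := by
  have dneg : ∀ s < 0, HasDerivAt g 0 s := fun s hs =>
    (hasDerivAt_const s (0:ℝ)).congr_of_eventuallyEq (by
      filter_upwards [Iio_mem_nhds hs] with r hr using hg_ext r (le_of_lt hr))
  have d0 : HasDerivAt g 0 0 := by
    rw [hasDerivAt_iff_tendsto_slope, ← Iio_union_Ioi, nhdsWithin_union, tendsto_sup]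
    have es : ∀ s, slope g 0 s = g s / s := fun s => by
      rw [slope_def_field, hg0, sub_zero, sub_zero]
    constructor
    · refine tendsto_const_nhds.congr' ?_
      filter_upwards [self_mem_nhdsWithin] with s hs
      rw [es, hg_ext s (le_of_lt hs), zero_div]
    · exact hg_zero.2.congr (fun s => (es s).symm)
  have dpos : ∀ s > 0, HasDerivAt g (deriv g s) s := fun s hs =>
    ((hg_C1.contDiffAt (Ici_mem_nhds hs)).differentiableAt (by norm_num)).hasDerivAt
  have hd : ∀ s, HasDerivAt g (deriv g s) s := fun s => by
    rcases lt_trichotomy s 0 with h | h | h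
    · exact (dneg s h).differentiableAt.hasDerivAt
    · subst h; exact d0.differentiableAt.hasDerivAt
    · exact dpos s h
  have dz : ∀ s ≤ 0, deriv g s = 0 := fun s hs => by
    rcases hs.eq_or_lt with h | h
    · subst h; exact d0.deriv
    · exact (dneg s h).deriv
  refine ⟨hd, ?_, hg0, hg_pos, fun s hs => ?_, hg_zero.1, hg_infty, fun s => ?_⟩
  · have c1 : ContinuousOn (deriv g) (Ici 0) :=
      (hg_C1.continuousOn_derivWithin (uniqueDiffOn_Ici 0) le_rfl).congr fun s hs =>
        ((hd s).hasDerivWithinAt.derivWithin (uniqueDiffOn_Ici 0 s hs)).symm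
    have c2 : ContinuousOn (deriv g) (Iic 0) :=
      (continuousOn_const (c := (0:ℝ))).congr fun s hs => dz s hs
    have := c2.union_of_isClosed c1 isClosed_Iic isClosed_Ici
    rw [Iic_union_Ici] at this
    exact continuousOn_univ.1 this
  · have := hg_s s hs
    rwa [div_lt_iff₀ hs] at this
  · rcases le_or_gt s 0 with h | h
    · rw [dz s h]
    · exact ((div_pos (hg_pos s h) h).trans (hg_s s h)).le

lemma posW_nonneg (h : ℝ → ℝ) (t : ℝ) : 0 ≤ posW h t := by
  unfold posW; linarith [neg_abs_le (h t)]
lemma negW_nonneg (h : ℝ → ℝ) (t : ℝ) : 0 ≤ negW h t := by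
  unfold negW; linarith [le_abs_self (h t)]
lemma posW_pos {h : ℝ → ℝ} {t : ℝ} (ht : 0 ≤ h t) : posW h t = h t := by
  unfold posW; rw [abs_of_nonneg ht]; ring
lemma posW_neg {h : ℝ → ℝ} {t : ℝ} (ht : h t ≤ 0) : posW h t = 0 := by
  unfold posW; rw [abs_of_nonpos ht]; ring
lemma negW_pos {h : ℝ → ℝ} {t : ℝ} (ht : 0 ≤ h t) : negW h t = 0 := by
  unfold negW; rw [abs_of_nonneg ht]; ring
lemma negW_neg {h : ℝ → ℝ} {t : ℝ} (ht : h t ≤ 0) : negW h t = - h t := by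
  unfold negW; rw [abs_of_nonpos ht]; ring

lemma Wt.build {σ τ : ℝ} (hl : σ < τ) {h : ℝ → ℝ} (hi : IntervalIntegrable h volume σ τ)
    (h1 : ∀ᵐ t ∂(volume.restrict (Set.Icc σ τ)), 0 ≤ h t)
    (h2 : ¬ (∀ᵐ t ∂(volume.restrict (Set.Icc σ τ)), h t = 0))
    (hs : ∀ᵐ t ∂(volume.restrict (Set.Icc σ τ)), posW h t = posW h (σ + τ - t))
    (hm : MonotoneOn (posW h) (Set.Icc σ ((σ + τ) / 2))) :
    ∃ c P, Wt σ τ c P ∧ ∀ᵐ t, t ∈ Ioc σ τ → posW h t = P t ∧ negW h t = 0 := by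
  rw [ae_restrict_iff' measurableSet_Icc] at h1 h2 hs
  let P : ℝ → ℝ := fun t => posW h (min t (σ + τ - t))
  have PL : ∀ t ≤ (σ + τ) / 2, P t = posW h t := fun t ht => by
    simp only [P]; rw [min_eq_left (by linarith)]
  have PR : ∀ t, (σ + τ) / 2 ≤ t → P t = posW h (σ + τ - t) := fun t ht => by
    simp only [P]; rw [min_eq_right (by linarith)]
  have hPe : ∀ᵐ t, t ∈ Icc σ τ → posW h t = P t := by
    filter_upwards [hs] with t ht htt
    rcases le_total t ((σ + τ) / 2) with h | h
    · rw [PL t h]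
    · rw [PR t h]; exact ht htt
  have ex : ∃ t1 ∈ Ico σ ((σ + τ) / 2), 0 < posW h t1 := by
    by_contra hcon
    push Not at hcon
    apply h2
    have hne : ∀ᵐ t : ℝ, t ≠ (σ + τ) / 2 := by
      rw [ae_iff]; simp
    filter_upwards [h1, hPe, hne] with t ht1 ht2 ht3 htt
    rw [← posW_pos (ht1 htt), ht2 htt]
    refine le_antisymm ?_ (posW_nonneg h _)
    rcases lt_or_gt_of_ne ht3 with h | h
    · rw [PL t h.le]; exact hcon t ⟨htt.1, h⟩
    · rw [PR t h.le]; exact hcon _ ⟨by linarith [htt.2], by linarith⟩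
  obtain ⟨t1, ht1, hp⟩ := ex
  have pi : IntervalIntegrable (posW h) volume σ τ := (hi.abs.div_const 2).add (hi.div_const 2)
  refine ⟨(t1 + (σ + τ) / 2) / 2, P, ⟨by linarith [ht1.1, ht1.2], by linarith [ht1.2],
    fun t _ => posW_nonneg h _, fun t => ?_, ?_, ?_, ?_⟩, ?_⟩
  · simp only [P]; rw [sub_sub_cancel, min_comm]
  · intro s hs t ht hst
    rw [PL s hs.2, PL t ht.2]; exact hm hs ht hst
  · exact ii_congr hl.le pi (by filter_upwards [hPe] with t ht htt using ht ⟨htt.1.le, htt.2⟩)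
  · rw [PL _ (by linarith [ht1.2])]
    exact hp.trans_le (hm ⟨ht1.1, ht1.2.le⟩ ⟨by linarith [ht1.1, ht1.2], by linarith [ht1.2]⟩ (by linarith [ht1.2]))
  · filter_upwards [h1, hPe] with t a1 a2 htt
    have mt : t ∈ Icc σ τ := ⟨htt.1.le, htt.2⟩
    exact ⟨a2 mt, negW_pos (a1 mt)⟩

lemma neg_int_pos {x y : ℝ} (hl : x < y) {h : ℝ → ℝ} (hi : IntervalIntegrable h volume x y)
    (h1 : ∀ᵐ t, t ∈ Icc x y → h t ≤ 0)
    (h2 : ¬ (∀ᵐ t, t ∈ Icc x y → h t = 0)) : 0 < ∫ t in x..y, negW h t := by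
  have ni : IntervalIntegrable (negW h) volume x y := (hi.abs.div_const 2).sub (hi.div_const 2)
  have nn : 0 ≤ ∫ t in x..y, negW h t := intervalIntegral.integral_nonneg hl.le fun t _ => negW_nonneg h t
  refine lt_of_le_of_ne nn fun e => h2 ?_
  have := (intervalIntegral.integral_eq_zero_iff_of_le_of_nonneg_ae hl.le
    (Eventually.of_forall fun t => negW_nonneg h t) ni).1 e.symm
  rw [EventuallyEq, ae_restrict_iff' measurableSet_Ioc] at this
  have hne : ∀ᵐ t : ℝ, t ≠ x := by rw [ae_iff]; simp
  filter_upwards [this, h1, hne] with t a1 a2 a3 ht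
  have b1 := a1 ⟨lt_of_le_of_ne ht.1 (Ne.symm a3), ht.2⟩
  rw [negW_neg (a2 ht)] at b1
  simpa using b1

/-- **Non-degeneracy for large `μ`.** Under the assumptions of the
exact multiplicity theorem, there exists `μ** > 0` such that for every `μ > μ**`
every positive solution of `(D_μ)` is non-degenerate: the only Carathéodory
solution of `w'' + (h⁺ - μ h⁻) g'(u) w = 0`, `w(a) = 0 = w(b)`, is `w ≡ 0`. -/
theorem nondegeneracy_for_large_mu
    (a b : ℝ) (hab : a < b)
    (g : ℝ → ℝ)
    (hg_C1 : ContDiffOn ℝ 1 g (Set.Ici 0))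
    (hg0 : g 0 = 0)
    (hg_pos : ∀ s > 0, 0 < g s)
    (hg_ext : ∀ s ≤ (0 : ℝ), g s = 0)
    (hg_s : ∀ s > (0 : ℝ), g s / s < deriv g s)
    (hg_zero : deriv g 0 = 0 ∧
      Tendsto (fun s => g s / s) (nhdsWithin 0 (Set.Ioi 0)) (nhds 0))
    (hg_infty : Tendsto (fun s => g s / s) atTop atTop)
    (h : ℝ → ℝ)
    (hh_int : IntegrableOn h (Set.Icc a b))
    (m : ℕ) (hm : 1 ≤ m)
    (σ τ : ℕ → ℝ)
    (hτ0 : τ 0 = a) (hσlast : σ (m + 1) = b)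
    (h0 : τ 0 ≤ σ 1) (hlast : τ m ≤ σ (m + 1))
    (hστ : ∀ i, 1 ≤ i → i ≤ m → σ i < τ i)
    (hτσ : ∀ i, 1 ≤ i → i < m → τ i < σ (i + 1))
    (hpos : ∀ i, 1 ≤ i → i ≤ m →
      (∀ᵐ t ∂(volume.restrict (Set.Icc (σ i) (τ i))), 0 ≤ h t) ∧
      ¬ (∀ᵐ t ∂(volume.restrict (Set.Icc (σ i) (τ i))), h t = 0))
    (hneg : ∀ i, i ≤ m →
      (∀ᵐ t ∂(volume.restrict (Set.Icc (τ i) (σ (i + 1)))), h t ≤ 0) ∧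
      (τ i < σ (i + 1) →
        ¬ (∀ᵐ t ∂(volume.restrict (Set.Icc (τ i) (σ (i + 1)))), h t = 0)))
    (hσleft : ∀ i, 1 ≤ i → i ≤ m → ∀ δ > (0 : ℝ),
      ¬ (∀ᵐ t ∂(volume.restrict (Set.Icc (σ i - δ) (σ i) ∩ Set.Icc a b)), h t = 0))
    (hτright : ∀ i, 1 ≤ i → i ≤ m → ∀ δ > (0 : ℝ),
      ¬ (∀ᵐ t ∂(volume.restrict (Set.Icc (τ i) (τ i + δ) ∩ Set.Icc a b)), h t = 0))
    (hBV : ∀ i, 1 ≤ i → i ≤ m → BoundedVariationOn (posW h) (Set.Icc (σ i) (τ i)))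
    (hsymm : ∀ i, 1 ≤ i → i ≤ m →
      ∀ᵐ t ∂(volume.restrict (Set.Icc (σ i) (τ i))), posW h t = posW h (σ i + τ i - t))
    (hmono : ∀ i, 1 ≤ i → i ≤ m →
      MonotoneOn (posW h) (Set.Icc (σ i) ((σ i + τ i) / 2))) :
    ∃ μss > (0 : ℝ), ∀ μ > μss,
      ∀ u u₁ : ℝ → ℝ,
        IsCaraSol a b (fun s x => (posW h s - μ * negW h s) * g x) u u₁ →
        u a = 0 → u b = 0 → (∀ t ∈ Set.Ioo a b, 0 < u t) →
        ∀ w w₁ : ℝ → ℝ,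
          IsCaraSol a b
            (fun s x => (posW h s - μ * negW h s) * deriv g (u s) * x) w w₁ →
          w a = 0 → w b = 0 → ∀ t ∈ Set.Icc a b, w t = 0 := by
  have hi : IntervalIntegrable h volume a b :=
    (intervalIntegrable_iff_integrableOn_Icc_of_le hab.le).2 hh_int
  have pi : IntervalIntegrable (posW h) volume a b := (hi.abs.div_const 2).add (hi.div_const 2)
  have ni : IntervalIntegrable (negW h) volume a b := (hi.abs.div_const 2).sub (hi.div_const 2)
  have G := GG.build hg_C1 hg0 hg_pos hg_ext hg_s hg_zero hg_infty
  have nul : ∀ c : ℝ, ∀ s : Set ℝ, s ⊆ {c} → ∀ᵐ t ∂(volume.restrict s), h t = 0 := by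
    intro c s hs
    have : volume s = 0 := measure_mono_null hs (by simp)
    rw [Measure.restrict_eq_zero.2 this]; simp
  have hlt : ∀ i ≤ m, τ i < σ (i + 1) := by
    intro i hi
    rcases Nat.eq_zero_or_pos i with h' | h'
    · subst h'
      rcases h0.eq_or_lt with e | e
      · exfalso
        refine hσleft 1 le_rfl hm 1 one_pos (nul a _ ?_)
        rintro t ⟨h1, h2⟩
        exact le_antisymm (by rw [← hτ0, e]; exact h1.2) h2.1
      · exact e
    · rcases hi.eq_or_lt with e | e
      · subst e
        rcases hlast.eq_or_lt with e | e
        · exfalso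
          refine hτright i hm le_rfl 1 one_pos (nul b _ ?_)
          rintro t ⟨h1, h2⟩
          exact le_antisymm h2.2 (by rw [← hσlast, ← e]; exact h1.1)
        · exact e
      · exact hτσ i h' e
  have st : ∀ j, j < m → τ j < τ (j + 1) := fun j hj =>
    (hlt j hj.le).trans (hστ (j + 1) (by omega) hj)
  have ha : ∀ i ≤ m, a ≤ τ i := by
    intro i
    induction i with
    | zero => intro _; exact hτ0.ge
    | succ j ih => intro hj; exact (ih (by omega)).trans (st j hj).le
  have hb' : ∀ k i, i + k = m → τ i ≤ b := by
    intro k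
    induction k with
    | zero => intro i hi; rw [← hσlast, ← hi]; exact (hlt i (by omega)).le
    | succ k ih => intro i hi; exact (st i (by omega)).le.trans (ih (i + 1) (by omega))
  have hb : ∀ i ≤ m, σ (i + 1) ≤ b := by
    intro i hi
    rcases hi.eq_or_lt with e | e
    · rw [e, hσlast]
    · exact (hστ (i + 1) (by omega) e).le.trans (hb' (m - (i + 1)) (i + 1) (by omega))
  have mτ : ∀ i ≤ m, τ i ∈ Icc a b := fun i hi => ⟨ha i hi, (hlt i hi).le.trans (hb i hi)⟩
  have mσ : ∀ i ≤ m, σ (i + 1) ∈ Icc a b := fun i hi => ⟨(ha i hi).trans (hlt i hi).le, hb i hi⟩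
  have hneg' : ∀ i ≤ m, ∀ᵐ t, t ∈ Icc (τ i) (σ (i + 1)) → h t ≤ 0 := fun i hi =>
    (ae_restrict_iff' measurableSet_Icc).1 (hneg i hi).1
  have key : ∀ i ≤ m, ∀ x y, τ i ≤ x → x < y → y ≤ σ (i + 1) →
      ¬ (∀ᵐ t ∂(volume.restrict (Icc x y ∩ Icc a b)), h t = 0) → 0 < ∫ t in x..y, negW h t := by
    intro i hi' x y hx hxy hy hn
    have mx : x ∈ Icc a b := ⟨(ha i hi').trans hx, (hxy.le.trans hy).trans (hb i hi')⟩
    have my : y ∈ Icc a b := ⟨mx.1.trans hxy.le, hy.trans (hb i hi')⟩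
    refine neg_int_pos hxy (ii_sub hi mx my) ?_ ?_
    · filter_upwards [hneg' i hi'] with t ht htt using ht ⟨hx.trans htt.1, htt.2.trans hy⟩
    · rw [inter_eq_left.2 (Icc_subset_Icc mx.1 my.2), ae_restrict_iff' measurableSet_Icc] at hn
      exact hn
  obtain ⟨μss, hμ, H⟩ := core hab G (posW_nonneg h) (negW_nonneg h) pi m σ τ hτ0 hσlast hlt ha hb
    (fun j hj => Wt.build (hστ (j + 1) (by omega) hj) (ii_sub hi (mσ j hj.le) (mτ (j + 1) hj))
      (hpos (j + 1) (by omega) hj).1 (hpos (j + 1) (by omega) hj).2 (hsymm (j + 1) (by omega) hj)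
      (hmono (j + 1) (by omega) hj))
    (fun i hi => by
      filter_upwards [hneg' i hi] with t ht htt using posW_neg (ht ⟨htt.1.le, htt.2⟩))
    (fun j hj => ⟨sub_pos.2 (hlt j hj.le), negW_nonneg h, by
        rw [sub_sub_cancel]; exact ii_sub ni (mτ j hj.le) (mσ j hj.le), fun δ h1 h2 =>
        key j hj.le _ _ (by linarith) (by linarith) le_rfl (hσleft (j + 1) (by omega) hj δ h1)⟩)
    (fun j hj => ⟨sub_pos.2 (hlt (j + 1) hj), fun t => negW_nonneg h _, by
        have := (ii_sub ni (mτ (j + 1) hj) (mσ (j + 1) hj)).comp_sub_left (2 * τ (j + 1))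
        have e1 : 2 * τ (j + 1) - σ (j + 1 + 1) = τ (j + 1) - (σ (j + 2) - τ (j + 1)) := by ring
        have e2 : 2 * τ (j + 1) - τ (j + 1) = τ (j + 1) := by ring
        rw [e1, e2] at this
        exact this.symm, fun δ h1 h2 => by
        rw [intervalIntegral.integral_comp_sub_left (fun t => negW h t)]
        have e1 : 2 * τ (j + 1) - (τ (j + 1) - δ) = τ (j + 1) + δ := by ring
        have e2 : 2 * τ (j + 1) - τ (j + 1) = τ (j + 1) := by ring
        rw [e1, e2]
        exact key (j + 1) hj _ _ le_rfl (by linarith) (by linarith) (hτright (j + 1) (by omega) hj δ h1)⟩)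
  refine ⟨μss, hμ, fun μ hμ u u₁ hu ua ub up w w₁ hw wa wb => ?_⟩
  exact H μ hμ u u₁ (hu.toSol hab.le) ua ub up w w₁ (hw.toSol hab.le) wa wb
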